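/- arXiv:2006.10401 — 7 statements merged into one kernel-verified Lean document; each statement's English description precedes it below -/
import Mathlib

section
/- Let α ∈ (0,1) and let ℓ : (0,∞) → (0,∞) be measurable and slowly varying at infinity. Then there exists a measurable function r : (0,∞) → (0,∞) such that lim_{t→∞} α t^α ℓ(t/r(t)) / (r(t))^{α+1} = 1, and moreover r is regularly varying at infinity with index α/(α+1), i.e. for every c > 0, r(ct)/r(t) → c^{α/(α+1)} as t → ∞. -/
open MeasureTheory Set Filter Real

lemma uct_aux (h : ℝ → ℝ) (hm : Measurable h)
    (hp : ∀ u : ℝ, Tendsto (fun x => h (x + u) - h x) atTop (nhds 0)) :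
    ∀ ε : ℝ, 0 < ε → ∃ X : ℝ, ∀ x, X ≤ x → ∀ u ∈ Set.Icc (0:ℝ) 1, |h (x + u) - h x| ≤ ε := by
  intro ε hε
  let k : ℝ → ℝ → ℝ := fun x v => min 1 |h (x + v) - h x|
  have kmeas : ∀ x, Measurable (k x) := fun x => by
    have : Measurable fun v => h (x + v) := hm.comp (measurable_const_add x)
    exact measurable_const.min ((this.sub_const _).norm)
  have knn : ∀ x v, 0 ≤ k x v := fun x v => le_min zero_le_one (abs_nonneg _)
  have kle : ∀ x v, k x v ≤ 1 := fun x v => min_le_left _ _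
  have kint : ∀ x a b, IntervalIntegrable (k x) volume a b := fun x a b => by
    refine (intervalIntegrable_const (c := (1:ℝ))).mono_fun (kmeas x).aestronglyMeasurable ?_
    refine Eventually.of_forall fun v => ?_
    simp only [Real.norm_eq_abs, abs_one]
    rw [abs_of_nonneg (knn x v)]; exact kle x v
  have hφ : Tendsto (fun x => ∫ v in (0:ℝ)..2, k x v) atTop (nhds (∫ v in (0:ℝ)..2, (0:ℝ))) := by
    refine intervalIntegral.tendsto_integral_filter_of_dominated_convergence (fun _ => (1:ℝ)) ?_ ?_ ?_ ?_
    · exact Eventually.of_forall fun x => (kmeas x).aestronglyMeasurable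
    · refine Eventually.of_forall fun x => Eventually.of_forall fun v _ => ?_
      rw [Real.norm_eq_abs, abs_of_nonneg (knn x v)]; exact kle x v
    · exact intervalIntegrable_const
    · refine Eventually.of_forall fun v _ => ?_
      have h1 := (hp v).abs
      have h2 := (tendsto_const_nhds (x := (1:ℝ)) (f := atTop (α := ℝ))).min h1
      simpa [k] using h2
  simp only [intervalIntegral.integral_zero] at hφ
  obtain ⟨X, hX⟩ := eventually_atTop.1 (hφ.eventually (gt_mem_nhds (show 0 < min ε 1 / 2 by positivity)))
  refine ⟨X, fun x hx u hu => ?_⟩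
  have e1 := hX x hx
  have e2 := hX (x + u) (by linarith [hu.1])
  have i1 : ∫ v in (1:ℝ)..2, k x v ≤ ∫ v in (0:ℝ)..2, k x v :=
    intervalIntegral.integral_mono_interval (by norm_num) (by norm_num) (by norm_num)
      (Eventually.of_forall fun v => knn x v) (kint _ _ _)
  have i2 : ∫ v in (1:ℝ)..2, k (x + u) (v - u) ≤ ∫ v in (0:ℝ)..2, k (x + u) v := by
    rw [intervalIntegral.integral_comp_sub_right (fun w => k (x + u) w) u]
    exact intervalIntegral.integral_mono_interval (by linarith [hu.2]) (by linarith)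
      (by linarith [hu.1]) (Eventually.of_forall fun v => knn _ v) (kint _ _ _)
  have kint2 : IntervalIntegrable (fun v => k (x + u) (v - u)) volume 1 2 := by
    have := (kint (x + u) (1 - u) (2 - u)).comp_sub_right u
    simpa using this
  have i3 : ∫ v in (1:ℝ)..2, k x u ≤ ∫ v in (1:ℝ)..2, (k x v + k (x + u) (v - u)) := by
    refine intervalIntegral.integral_mono_on (by norm_num) intervalIntegrable_const
      ((kint _ _ _).add kint2) fun v _ => ?_
    simp only [k]
    rw [show x + u + (v - u) = x + v by ring]
    have t : |h (x + u) - h x| ≤ |h (x + v) - h x| + |h (x + v) - h (x + u)| := by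
      rw [abs_sub_comm (h (x + v)) (h (x + u))]
      have := abs_sub_le (h (x+u)) (h (x+v)) (h x)
      linarith
    rcases min_cases (1:ℝ) |h (x + u) - h x| with a | a <;>
    rcases min_cases (1:ℝ) |h (x + v) - h x| with b | b <;>
    rcases min_cases (1:ℝ) |h (x + v) - h (x + u)| with c | c <;>
    linarith [abs_nonneg (h (x + v) - h x), abs_nonneg (h (x + v) - h (x + u))]
  rw [intervalIntegral.integral_add (kint _ _ _) kint2, intervalIntegral.integral_const] at i3
  have i4 : k x u < min ε 1 := by
    have : ((2:ℝ) - 1) • k x u = k x u := by norm_num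
    linarith
  simp only [k] at i4
  rcases min_cases (1:ℝ) |h (x + u) - h x| with a | a <;>
  rcases min_cases ε (1:ℝ) with b | b <;> linarith

lemma inv_aux (ρ : ℝ) (hρ : 1 ≤ ρ) (h : ℝ → ℝ)
    (hp : ∀ u : ℝ, Tendsto (fun x => h (x + u) - h x) atTop (nhds 0))
    (hU : ∀ ε : ℝ, 0 < ε → ∃ X : ℝ, ∀ x, X ≤ x → ∀ u ∈ Set.Icc (0:ℝ) 1,
      |h (x + u) - h x| ≤ ε) :
    ∃ y : ℝ → ℝ, Monotone y ∧
      Tendsto (fun τ => ρ * y τ + h (y τ) - τ) atTop (nhds 0) ∧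
      ∀ u : ℝ, Tendsto (fun τ => y (τ + u) - y τ) atTop (nhds (u / ρ)) := by
  obtain ⟨X0, hX0⟩ := hU (1/2) (by norm_num)
  have hb0 : ∀ n : ℕ, ∀ x, X0 ≤ x → x ≤ X0 + n → |h x - h X0| ≤ n / 2 := by
    intro n
    induction n with
    | zero =>
      intro x h1 h2
      have : x = X0 := le_antisymm (by simpa using h2) h1
      simp [this]
    | succ n ih =>
      intro x h1 h2
      push_cast at h2 ⊢
      by_cases hx : x ≤ X0 + 1
      · have := hX0 X0 le_rfl (x - X0) ⟨by linarith, by linarith⟩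
        rw [add_sub_cancel] at this
        have : (0:ℝ) ≤ n := n.cast_nonneg
        linarith
      · push Not at hx
        have a := ih (x - 1) (by linarith) (by linarith)
        have b := hX0 (x - 1) (by linarith) 1 (by simp)
        rw [sub_add_cancel] at b
        have := abs_sub_le (h x) (h (x - 1)) (h X0)
        linarith
  have hb : ∀ x, X0 ≤ x → |h x - h X0| ≤ (x - X0 + 1) / 2 := by
    intro x hx
    have a := hb0 ⌈x - X0⌉₊ x hx (by linarith [Nat.le_ceil (x - X0)])
    have b := Nat.ceil_lt_add_one (sub_nonneg.2 hx)
    linarith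
  let S : ℝ → Set ℝ := fun τ => {x | X0 ≤ x ∧ τ ≤ ρ * x + h x}
  have Sbdd : ∀ τ, BddBelow (S τ) := fun τ => ⟨X0, fun x hx => hx.1⟩
  have Sne : ∀ τ, (S τ).Nonempty := by
    intro τ
    refine ⟨X0 + 2 * (|τ| + |ρ * X0| + |h X0| + 1), ?_, ?_⟩
    · have := abs_nonneg τ; have := abs_nonneg (ρ * X0); have := abs_nonneg (h X0); linarith
    · set d := |τ| + |ρ * X0| + |h X0| + 1 with hd
      have hd0 : 0 ≤ d := by positivity
      have a := abs_le.1 (hb (X0 + 2 * d) (by linarith))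
      have c : ρ * (X0 + 2 * d) ≥ ρ * X0 + 2 * d := by nlinarith
      have := le_abs_self τ
      have := neg_abs_le (ρ * X0)
      have := neg_abs_le (h X0)
      linarith [a.1]
  let y : ℝ → ℝ := fun τ => sInf (S τ)
  have ymono : Monotone y := fun a b hab =>
    csInf_le_csInf (Sbdd a) (Sne b) fun x hx => ⟨hx.1, hab.trans hx.2⟩
  have yle : ∀ τ x, X0 ≤ x → τ ≤ ρ * x + h x → y τ ≤ x := fun τ x h1 h2 =>
    csInf_le (Sbdd τ) ⟨h1, h2⟩
  have ytop : Tendsto y atTop atTop := by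
    refine tendsto_atTop.2 fun M => ?_
    filter_upwards [eventually_gt_atTop (ρ * M + h X0 + (|M - X0| + 1) / 2)] with τ hτ
    refine le_csInf (Sne τ) fun x hx => ?_
    by_contra! hc
    have a := abs_le.1 (hb x hx.1)
    have b : ρ * x ≤ ρ * M := by nlinarith
    have := hx.2
    have := le_abs_self (M - X0)
    linarith [a.2]
  have ylim : Tendsto (fun τ => ρ * y τ + h (y τ) - τ) atTop (nhds 0) := by
    rw [Metric.tendsto_nhds]
    intro ε hε
    obtain ⟨X, hX⟩ := hU (ε/4) (by positivity)
    have hρ0 : 0 < ρ := by linarith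
    let δ := min 1 (ε / (4 * ρ))
    have hδ : 0 < δ := by positivity
    have hδ1 : δ ≤ 1 := min_le_left _ _
    have hδ2 : ρ * δ ≤ ε / 4 := by
      have : δ ≤ ε / (4 * ρ) := min_le_right _ _
      calc ρ * δ ≤ ρ * (ε / (4 * ρ)) := by gcongr
        _ = ε / 4 := by field_simp
    filter_upwards [ytop.eventually_ge_atTop (max X X0 + 1)] with τ hτ
    have hτ1 : X + 1 ≤ y τ := by linarith [le_max_left X X0]
    have hτ2 : X0 + 1 ≤ y τ := by linarith [le_max_right X X0]
    obtain ⟨x, hxS, hx⟩ := exists_lt_of_csInf_lt (Sne τ) (show sInf (S τ) < y τ + δ by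
      change y τ < _; linarith)
    have hyx : y τ ≤ x := csInf_le (Sbdd τ) hxS
    have a := abs_le.1 (hX (y τ) (by linarith) (x - y τ) ⟨by linarith, by linarith⟩)
    rw [add_sub_cancel] at a
    have b := abs_le.1 (hX (y τ - δ) (by linarith) δ ⟨hδ.le, hδ1⟩)
    rw [sub_add_cancel] at b
    have c : ρ * (y τ - δ) + h (y τ - δ) < τ := by
      by_contra! hc
      have := yle τ (y τ - δ) (by linarith) hc
      linarith
    have d := hxS.2
    have e : ρ * x ≤ ρ * y τ + ρ * δ := by nlinarith
    rw [Real.dist_eq, sub_zero, abs_lt]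
    constructor <;> nlinarith [a.1, a.2, b.1, b.2]
  have hρ0 : 0 < ρ := by linarith
  have yup : ∀ u ε : ℝ, 0 < ε → ∀ᶠ τ in atTop, y (τ + u) ≤ y τ + u / ρ + ε := by
    intro u ε hε
    have l1 := ((hp (u / ρ + ε)).comp ytop).add ylim
    simp only [add_zero] at l1
    have l2 := l1.eventually (lt_mem_nhds (show -(ρ * ε) < 0 by
      have : 0 < ρ * ε := by positivity
      linarith))
    filter_upwards [l2, ytop.eventually_ge_atTop (X0 - (u / ρ + ε))] with τ h1 h2
    rw [add_assoc]
    refine yle _ _ (by linarith) ?_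
    simp only [Function.comp] at h1
    have : ρ * (y τ + (u / ρ + ε)) = ρ * y τ + u + ρ * ε := by field_simp; ring
    rw [this]; linarith
  refine ⟨y, ymono, ylim, fun u => ?_⟩
  rw [Metric.tendsto_nhds]
  intro ε hε
  have h2 := (tendsto_atTop_add_const_right atTop u tendsto_id).eventually
    (yup (-u) (ε/2) (by positivity))
  filter_upwards [yup u (ε/2) (by positivity), h2] with τ a b
  simp only [id, add_neg_cancel_right, neg_div] at b
  rw [Real.dist_eq, abs_lt]
  constructor <;> linarith

/-- Remark 1.2: for `α ∈ (0,1)` and `ℓ` measurable slowly varying at infinity there exists a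
measurable `r : (0,∞) → (0,∞)` with `α t^α ℓ(t/r(t)) / r(t)^(α+1) → 1`, and `r` is
regularly varying at infinity with index `α/(α+1)`. -/
theorem stmt_6
    (α : ℝ) (hα : α ∈ Set.Ioo (0:ℝ) 1)
    (ℓ : ℝ → ℝ) (hℓmeas : Measurable ℓ)
    (hℓpos : ∀ x : ℝ, 0 < x → 0 < ℓ x)
    (hℓsv : ∀ c : ℝ, 0 < c → Tendsto (fun t => ℓ (c * t) / ℓ t) atTop (nhds 1)) :
    ∃ r : ℝ → ℝ, Measurable r ∧ (∀ t : ℝ, 0 < t → 0 < r t) ∧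
      Tendsto (fun t => α * t ^ α * ℓ (t / r t) / r t ^ (α + 1)) atTop (nhds 1) ∧
      ∀ c : ℝ, 0 < c →
        Tendsto (fun t => r (c * t) / r t) atTop (nhds (c ^ (α / (α + 1)))) := by
  obtain ⟨hα0, -⟩ := hα
  let h : ℝ → ℝ := fun x => Real.log α + Real.log (ℓ (Real.exp x))
  have hm : Measurable h :=
    (Real.measurable_log.comp (hℓmeas.comp Real.measurable_exp)).const_add _
  have hp : ∀ u : ℝ, Tendsto (fun x => h (x + u) - h x) atTop (nhds 0) := by
    intro u
    have a := ((hℓsv (Real.exp u) (Real.exp_pos u)).comp Real.tendsto_exp_atTop).log one_ne_zero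
    rw [Real.log_one] at a
    refine a.congr fun x => ?_
    simp only [Function.comp, h]
    rw [← Real.exp_add, Real.log_div (hℓpos _ (Real.exp_pos _)).ne' (hℓpos _ (Real.exp_pos _)).ne',
      add_comm u x]
    ring
  obtain ⟨y, ymono, ylim, yreg⟩ := inv_aux (α + 1) (by linarith) h hp (uct_aux h hm hp)
  refine ⟨fun t => t / Real.exp (y (Real.log t)), ?_, ?_, ?_, ?_⟩
  · exact measurable_id.div (Real.measurable_exp.comp (ymono.measurable.comp Real.measurable_log))
  · intro t ht; positivity
  · have a := (Real.continuous_exp.tendsto 0).comp (ylim.comp Real.tendsto_log_atTop)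
    rw [Real.exp_zero] at a
    refine a.congr' ?_
    filter_upwards [eventually_gt_atTop 0] with t ht
    simp only [Function.comp, h]
    have hl := hℓpos _ (Real.exp_pos (y (Real.log t)))
    rw [div_div_cancel₀ ht.ne', Real.rpow_def_of_pos ht, Real.rpow_def_of_pos (by positivity),
      Real.log_div ht.ne' (Real.exp_pos _).ne', Real.log_exp]
    nth_rewrite 3 [← Real.exp_log hα0]
    nth_rewrite 2 [← Real.exp_log hl]
    rw [← Real.exp_add, ← Real.exp_add, ← Real.exp_sub]
    congr 1
    ring
  · intro c hc
    have a := (((Real.continuous_exp.tendsto _).comp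
      ((yreg (Real.log c)).neg.comp Real.tendsto_log_atTop))).const_mul c
    have e : c * Real.exp (-(Real.log c / (α + 1))) = c ^ (α / (α + 1)) := by
      rw [Real.rpow_def_of_pos hc]
      nth_rewrite 1 [← Real.exp_log hc]
      rw [← Real.exp_add]
      congr 1
      field_simp
      ring
    rw [e] at a
    refine a.congr' ?_
    filter_upwards [eventually_gt_atTop 0] with t ht
    simp only [Function.comp]
    rw [Real.log_mul hc.ne' ht.ne', add_comm (Real.log c), neg_sub, Real.exp_sub]
    field_simp
end

section
/- Let ℓ : (0,∞) → (0,∞) be a locally bounded function that is slowly varying at infinity, let q be a function of class 𝒬, and fix a constant a with 0 < a < 1. Then lim_{t→∞} [∫₀^{a q(t)} y^{q(t)−1} e^{−y} ℓ(t/y) dy] / [Γ(q(t)) ℓ(t/q(t))] = 0. -/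
open MeasureTheory Set Filter Real

lemma aux_scale (g : ℝ → ℝ) (c b d : ℝ) (hc : 0 < c) (hbd : c * d ≤ b)
    (hg : AEMeasurable g (volume.restrict (Ioc 0 b))) :
    AEMeasurable (fun v => g (c * v)) (volume.restrict (Ioc 0 d)) := by
  have hq : Measure.QuasiMeasurePreserving (fun v : ℝ => c * v) volume volume := by
    refine ⟨measurable_const_mul c, ?_⟩
    rw [Real.map_volume_mul_left hc.ne']
    exact Measure.smul_absolutelyContinuous
  have hr := hq.restrict (s := Ioc 0 d) (t := Ioc 0 b) (by
    intro v hv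
    exact ⟨mul_pos hc hv.1, le_trans (mul_le_mul_of_nonneg_left hv.2 hc.le) hbd⟩)
  exact hg.comp_quasiMeasurePreserving hr

lemma aux_conv (g : ℝ → ℝ)
    (hsv : ∀ c : ℝ, 0 < c → Tendsto (fun s => g (s * c) / g s) (nhdsWithin 0 (Ioi 0)) (nhds 1))
    (r : ℝ) (hr : 0 < r) (hg : AEMeasurable g (volume.restrict (Ioc 0 r)))
    (s : ℕ → ℝ) (hs : Tendsto s atTop (nhdsWithin 0 (Ioi 0))) (hs0 : ∀ n, 0 < s n)
    (hsr : ∀ n, s n ≤ r) :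
    Tendsto (fun n => volume.restrict (Ioc (0:ℝ) 1)
      {v | 1/3 ≤ dist (g (s n * v) / g (s n)) 1}) atTop (nhds 0) := by
  have h := tendstoInMeasure_of_tendsto_ae (μ := volume.restrict (Ioc (0:ℝ) 1))
    (f := fun n v => g (s n * v) / g (s n)) (g := fun _ => (1:ℝ)) ?_ ?_
  · exact tendstoInMeasure_iff_dist.1 h (1/3) (by norm_num)
  · intro n
    exact ((aux_scale g (s n) r 1 (hs0 n) (by simpa using hsr n) hg).div_const _).aestronglyMeasurable
  · refine (ae_restrict_iff' measurableSet_Ioc).2 (Eventually.of_forall fun v hv => ?_)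
    exact (hsv v hv.1).comp hs

lemma aux_local (g : ℝ → ℝ) (hpos : ∀ x, 0 < x → 0 < g x)
    (hsv : ∀ c : ℝ, 0 < c → Tendsto (fun s => g (s * c) / g s) (nhdsWithin 0 (Ioi 0)) (nhds 1))
    (r : ℝ) (hr : 0 < r) (hg : AEMeasurable g (volume.restrict (Ioc 0 r))) :
    ∃ s0 : ℝ, 0 < s0 ∧ ∀ s, 0 < s → s < s0 → ∀ l, 1/2 ≤ l → l ≤ 1 → g (s * l) ≤ 2 * g s := by
  by_contra! H
  have H2 : ∀ n : ℕ, ∃ s, 0 < s ∧ s < min r (1 / ((n:ℝ) + 1)) ∧ ∃ l, 1/2 ≤ l ∧ l ≤ 1 ∧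
      2 * g s < g (s * l) := by
    intro n
    exact H _ (lt_min hr (by positivity))
  choose s hs0 hsm l hl hl1 hgl using H2
  have hl0 : ∀ n, 0 < l n := fun n => by linarith [hl n]
  have hs : Tendsto s atTop (nhds 0) :=
    squeeze_zero (fun n => (hs0 n).le) (fun n => ((hsm n).trans_le (min_le_right _ _)).le)
      tendsto_one_div_add_atTop_nhds_zero_nat
  have hsl : Tendsto (fun n => s n * l n) atTop (nhds 0) :=
    squeeze_zero (fun n => (mul_pos (hs0 n) (hl0 n)).le)
      (fun n => mul_le_of_le_one_right (hs0 n).le (hl1 n)) hs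
  have hsr : ∀ n, s n ≤ r := fun n => ((hsm n).trans_le (min_le_left _ _)).le
  have c1 := aux_conv g hsv r hr hg s
    (tendsto_nhdsWithin_iff.2 ⟨hs, Eventually.of_forall hs0⟩) hs0 hsr
  have c2 := aux_conv g hsv r hr hg (fun n => s n * l n)
    (tendsto_nhdsWithin_iff.2 ⟨hsl, Eventually.of_forall fun n => mul_pos (hs0 n) (hl0 n)⟩)
    (fun n => mul_pos (hs0 n) (hl0 n))
    (fun n => (mul_le_of_le_one_right (hs0 n).le (hl1 n)).trans (hsr n))
  have he : (0:ENNReal) < ENNReal.ofReal (1/16) := by simp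
  obtain ⟨n, h1, h2⟩ := ((c1.eventually_lt_const he).and (c2.eventually_lt_const he)).exists
  rw [Measure.restrict_apply' measurableSet_Ioc] at h1 h2
  set B1 := {v | 1/3 ≤ dist (g (s n * v) / g (s n)) 1} ∩ Ioc (0:ℝ) 1 with hB1
  set B2 := {v | 1/3 ≤ dist (g (s n * l n * v) / g (s n * l n)) 1} ∩ Ioc (0:ℝ) 1 with hB2
  have h3 : volume ((fun w => (l n)⁻¹ * w) ⁻¹' B2) ≤ ENNReal.ofReal (1/16) := by
    rw [Real.volume_preimage_mul_left (inv_ne_zero (hl0 n).ne'), inv_inv, abs_of_pos (hl0 n)]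
    calc _ ≤ 1 * volume B2 := by
          gcongr
          exact ENNReal.ofReal_le_one.2 (hl1 n)
      _ ≤ _ := by rw [one_mul]; exact h2.le
  have h4 : ∃ w ∈ Icc (1/4:ℝ) (1/2), w ∉ B1 ∧ (l n)⁻¹ * w ∉ B2 := by
    by_contra! hc
    have hsub : Icc (1/4:ℝ) (1/2) ⊆ B1 ∪ ((fun w => (l n)⁻¹ * w) ⁻¹' B2) := by
      intro w hw
      by_cases hh : w ∈ B1
      · exact Or.inl hh
      · exact Or.inr (hc w hw hh)
    have h5 := (measure_mono (μ := volume) hsub).trans (measure_union_le _ _)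
    have h6 := h5.trans (add_le_add h1.le h3)
    rw [Real.volume_Icc, ← ENNReal.ofReal_add (by norm_num) (by norm_num),
      ENNReal.ofReal_le_ofReal_iff (by norm_num)] at h6
    norm_num at h6
  obtain ⟨w, hw, hw1, hw2⟩ := h4
  have hv1 : (l n)⁻¹ * w ≤ 1 := by
    rw [inv_mul_le_iff₀ (hl0 n)]; linarith [hl n, hw.2]
  have hw0 : 0 < w := by linarith [hw.1]
  have hv0 : 0 < (l n)⁻¹ * w := mul_pos (inv_pos.2 (hl0 n)) hw0
  have e1 : dist (g (s n * w) / g (s n)) 1 < 1/3 := by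
    by_contra! hh
    exact hw1 ⟨hh, hw0, by linarith [hw.2]⟩
  have e2 : dist (g (s n * l n * ((l n)⁻¹ * w)) / g (s n * l n)) 1 < 1/3 := by
    by_contra! hh
    exact hw2 ⟨hh, hv0, hv1⟩
  have e3 : s n * l n * ((l n)⁻¹ * w) = s n * w := by
    have := (hl0 n).ne'
    field_simp
  rw [e3] at e2
  rw [Real.dist_eq, abs_lt] at e1 e2
  have p1 := hpos _ (hs0 n)
  have p2 := hpos _ (mul_pos (hs0 n) (hl0 n))
  have f1 : g (s n * w) < (4/3) * g (s n) := by
    rw [← div_lt_iff₀ p1]; linarith [e1.2]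
  have f2 : (2/3) * g (s n * l n) < g (s n * w) := by
    rw [← lt_div_iff₀ p2]; linarith [e2.1]
  linarith [hgl n]

lemma aux_potter (g : ℝ → ℝ) (s0 : ℝ)
    (hpos : ∀ x, 0 < x → 0 < g x)
    (h : ∀ s, 0 < s → s < s0 → ∀ l, 1/2 ≤ l → l ≤ 1 → g (s * l) ≤ 2 * g s) (n : ℕ) :
    ∀ l : ℝ, (1/2)^n ≤ l → l ≤ 1 → ∀ s, 0 < s → s < s0 → l * g (s * l) ≤ 2 * g s := by
  induction n with
  | zero =>
    intro l h0 h1 s hs hs0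
    have : l = 1 := le_antisymm h1 (by simpa using h0)
    subst this
    have := hpos s hs
    simp only [mul_one, one_mul]; linarith
  | succ n ih =>
    intro l h0 h1 s hs hs0
    by_cases hl : 1/2 ≤ l
    · have := h s hs hs0 l hl h1
      have := hpos (s * l) (mul_pos hs (by linarith))
      nlinarith
    · push Not at hl
      have a1 := ih (2 * l) (by rw [pow_succ] at h0; linarith) (by linarith) (s * (1/2))
        (by linarith) (by linarith)
      have a2 := h s hs hs0 (1/2) le_rfl (by norm_num)
      have e : s * (1/2) * (2 * l) = s * l := by ring
      rw [e] at a1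
      linarith

theorem stmt_7
    (ℓ : ℝ → ℝ)
    (hℓpos : ∀ x : ℝ, 0 < x → 0 < ℓ x)
    (hℓloc : ∀ a b : ℝ, 0 < a → BddAbove (ℓ '' Set.Icc a b))
    (hℓsv : ∀ c : ℝ, 0 < c → Tendsto (fun t => ℓ (c * t) / ℓ t) atTop (nhds 1))
    (q : ℝ → ℝ)
    (hqpos : ∀ t : ℝ, 0 < t → 0 < q t)
    (hqtop : Tendsto q atTop atTop)
    (hqsmall : Tendsto (fun t => q t / t) atTop (nhds 0))
    (a : ℝ) (ha : 0 < a) (ha1 : a < 1) :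
    Tendsto (fun t =>
      (∫ y in Set.Ioc (0:ℝ) (a * q t), y ^ (q t - 1) * Real.exp (-y) * ℓ (t / y)) /
        (Real.Gamma (q t) * ℓ (t / q t))) atTop (nhds 0) := by
  set g : ℝ → ℝ := fun y => ℓ y⁻¹ with hgdef
  have hpos : ∀ x, 0 < x → 0 < g x := fun x hx => hℓpos _ (inv_pos.2 hx)
  have hsv : ∀ c : ℝ, 0 < c →
      Tendsto (fun s => g (s * c) / g s) (nhdsWithin 0 (Ioi 0)) (nhds 1) := by
    intro c hc
    have := (hℓsv c⁻¹ (inv_pos.2 hc)).comp tendsto_inv_nhdsGT_zero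
    refine this.congr fun s => ?_
    simp [hgdef, mul_inv, mul_comm]
  have hgl : ∀ t y, ℓ (t / y) = g (y / t) := fun t y => by simp [hgdef, inv_div]
  by_cases hP : ∃ r : ℝ, 0 < r ∧ AEMeasurable g (volume.restrict (Ioc 0 r))
  · obtain ⟨r, hr, hg⟩ := hP
    obtain ⟨s0, hs0, hloc⟩ := aux_local g hpos hsv r hr hg
    have hpot : ∀ l : ℝ, 0 < l → l ≤ 1 → ∀ s, 0 < s → s < s0 → g (s * l) ≤ 2 / l * g s := by
      intro l hl hl1 s hs hss
      obtain ⟨n, hn⟩ := exists_pow_lt_of_lt_one hl (by norm_num : (1/2:ℝ) < 1)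
      have := aux_potter g s0 hpos hloc n l hn.le hl1 s hs hss
      rw [div_mul_eq_mul_div, le_div_iff₀ hl]; linarith
    have hρ : a * exp (1 - a) < 1 := by
      have h1 := Real.add_one_lt_exp (x := a - 1) (by linarith)
      have h2 : exp (a - 1) * exp (1 - a) = 1 := by rw [← Real.exp_add]; simp
      nlinarith [Real.exp_pos (1 - a)]
    have hlim : Tendsto (fun t => (4 / a) * (a * exp (1 - a)) ^ (q t)) atTop (nhds 0) := by
      have := (tendsto_rpow_atTop_of_base_lt_one (a * exp (1-a))
        (by linarith [mul_pos ha (Real.exp_pos (1 - a))]) hρ).comp hqtop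
      simpa using this.const_mul (4 / a)
    refine squeeze_zero' ?_ ?_ hlim
    · filter_upwards [eventually_gt_atTop 0] with t ht
      have hq := hqpos t ht
      refine div_nonneg (setIntegral_nonneg measurableSet_Ioc fun y hy => ?_)
        (mul_pos (Real.Gamma_pos_of_pos hq) (hℓpos _ (div_pos ht hq))).le
      have := hℓpos _ (div_pos ht hy.1)
      have := Real.rpow_nonneg hy.1.le (q t - 1)
      positivity
    · filter_upwards [eventually_gt_atTop 0, hqtop.eventually_ge_atTop 2,
        hqsmall.eventually_lt_const hs0] with t ht hq2 hqs
      set Q := q t with hQ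
      have hq : 0 < Q := by linarith
      have hG : 0 < g (Q / t) := hpos _ (div_pos hq ht)
      have hG1 : 0 < Real.Gamma (Q - 1) := Real.Gamma_pos_of_pos (by linarith)
      have hGam : Real.Gamma Q = (Q - 1) * Real.Gamma (Q - 1) := by
        have := Real.Gamma_add_one (s := Q - 1) (by linarith)
        simpa using this
      have hval := Real.integral_rpow_mul_exp_neg_mul_Ioi (a := Q - 1) (r := 1 / a)
        (by linarith) (by positivity)
      rw [one_div_one_div] at hval
      have hint : IntegrableOn (fun y : ℝ => y ^ (Q - 1 - 1) * exp (-(1 / a * y))) (Ioi 0) := by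
        by_contra hc
        have := integral_undef hc
        rw [this] at hval
        have : 0 < a ^ (Q - 1) * Real.Gamma (Q - 1) := mul_pos (Real.rpow_pos_of_pos ha _) hG1
        linarith
      set K := 2 * Q * exp ((1 - a) * Q) * g (Q / t) with hK
      have hK0 : 0 < K := by positivity
      have hbound : (∫ y in Set.Ioc (0:ℝ) (a * Q), y ^ (Q - 1) * Real.exp (-y) * ℓ (t / y))
          ≤ K * (a ^ (Q - 1) * Real.Gamma (Q - 1)) := by
        calc _ ≤ ∫ y in Set.Ioc (0:ℝ) (a * Q), K * (y ^ (Q - 1 - 1) * exp (-(1 / a * y))) := by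
              refine integral_mono_of_nonneg ?_ ?_ ?_
              · refine (ae_restrict_iff' measurableSet_Ioc).2 (Eventually.of_forall fun y hy => ?_)
                have := hℓpos _ (div_pos ht hy.1)
                have := Real.rpow_nonneg hy.1.le (Q - 1)
                simp only [Pi.zero_apply]
                positivity
              · exact (hint.mono_set Ioc_subset_Ioi_self).const_mul K
              · refine (ae_restrict_iff' measurableSet_Ioc).2 (Eventually.of_forall fun y hy => ?_)
                have hy0 : 0 < y := hy.1
                have hyQ : y ≤ Q := hy.2.trans (by nlinarith)
                have b1 := hpot (y / Q) (by positivity) ((div_le_one hq).2 hyQ) (Q / t)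
                  (div_pos hq ht) hqs
                have e1 : Q / t * (y / Q) = y / t := by field_simp
                have e2 : 2 / (y / Q) = 2 * Q / y := by field_simp
                rw [e1, e2] at b1
                have e3 : y ^ (Q - 1) = y ^ (Q - 1 - 1) * y := by
                  rw [Real.rpow_sub_one hy0.ne' (Q - 1)]; field_simp
                have b2 : exp (-y) ≤ exp ((1 - a) * Q) * exp (-(1 / a * y)) := by
                  rw [← Real.exp_add]
                  apply Real.exp_le_exp.2
                  have : 1 / a * y ≤ Q + 0 := by
                    rw [one_div, inv_mul_le_iff₀ ha]; linarith [hy.2]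
                  have e4 : y = a * (1 / a * y) := by field_simp
                  nlinarith
                have hp := Real.rpow_pos_of_pos hy0 (Q - 1 - 1)
                show y ^ (Q - 1) * exp (-y) * ℓ (t / y) ≤ _
                rw [hgl, e3]
                calc _ ≤ y ^ (Q - 1 - 1) * y * (exp ((1 - a) * Q) * exp (-(1 / a * y))) *
                      (2 * Q / y * g (Q / t)) := by
                      have := (hpos (y / t) (div_pos hy0 ht)).le
                      gcongr
                  _ = _ := by rw [hK]; field_simp
          _ ≤ ∫ y in Set.Ioi (0:ℝ), K * (y ^ (Q - 1 - 1) * exp (-(1 / a * y))) := by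
              refine setIntegral_mono_set (hint.const_mul K) ?_
                (Eventually.of_forall Ioc_subset_Ioi_self)
              refine (ae_restrict_iff' measurableSet_Ioi).2 (Eventually.of_forall fun y hy => ?_)
              have := Real.rpow_nonneg (le_of_lt hy) (Q - 1 - 1)
              simp only [Pi.zero_apply]
              positivity
          _ = _ := by rw [integral_const_mul, hval]
      rw [hgl, hGam]
      have hQ1 : 0 < Q - 1 := by linarith
      rw [div_le_iff₀ (by positivity)]
      refine hbound.trans ?_
      have e5 : (a * exp (1 - a)) ^ Q = a ^ (Q - 1) * a * exp ((1 - a) * Q) := by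
        rw [Real.mul_rpow ha.le (Real.exp_pos _).le, ← Real.exp_mul, Real.rpow_sub_one ha.ne']
        field_simp
      rw [e5, hK]
      have hap := Real.rpow_pos_of_pos ha (Q - 1)
      have e6 : 4 / a * (a ^ (Q - 1) * a * exp ((1 - a) * Q)) *
          ((Q - 1) * Real.Gamma (Q - 1) * g (Q / t)) =
          (4 * (Q - 1)) * (exp ((1 - a) * Q) * g (Q / t) * (a ^ (Q - 1) * Real.Gamma (Q - 1))) := by
        field_simp
      rw [e6]
      calc _ = (2 * Q) * (exp ((1 - a) * Q) * g (Q / t) *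
            (a ^ (Q - 1) * Real.Gamma (Q - 1))) := by ring
        _ ≤ _ := by
          exact mul_le_mul_of_nonneg_right (by linarith) (by positivity)
  · refine (tendsto_const_nhds (x := (0:ℝ))).congr' ?_
    filter_upwards [eventually_gt_atTop 0] with t ht
    have hq := hqpos t ht
    rw [integral_undef, zero_div]
    intro hI
    apply hP
    refine ⟨a * q t / t, by positivity, ?_⟩
    have m1 := hI.aestronglyMeasurable.aemeasurable
    have m2 : AEMeasurable (fun y => g (t⁻¹ * y)) (volume.restrict (Ioc 0 (a * q t))) := by
      have m3 : AEMeasurable (fun y : ℝ => y ^ (q t - 1) * exp (-y))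
          (volume.restrict (Ioc 0 (a * q t))) := by
        apply Measurable.aemeasurable; fun_prop
      refine (m1.div m3).congr ?_
      refine (ae_restrict_iff' measurableSet_Ioc).2 (Eventually.of_forall fun y hy => ?_)
      have hp := (Real.rpow_pos_of_pos hy.1 (q t - 1)).ne'
      have := (Real.exp_pos (-y)).ne'
      simp only [Pi.div_apply]
      rw [hgl, div_eq_inv_mul y t]
      field_simp
    have m4 := aux_scale _ t (a * q t) (a * q t / t) ht (by field_simp; rfl) m2
    refine m4.congr (Eventually.of_forall fun v => ?_)
    have : t⁻¹ * (t * v) = v := by field_simp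
    simp only [this]
end

section
/- Let ℓ : (0,∞) → (0,∞) be a locally bounded function that is slowly varying at infinity, let q be a function of class 𝒬, and fix a constant A with A > 1. Then lim_{t→∞} [∫_{A q(t)}^{∞} y^{q(t)−1} e^{−y} ℓ(t/y) dy] / [Γ(q(t)) ℓ(t/q(t))] = 0. -/
open MeasureTheory Set Filter Real

lemma uct_add (h : ℝ → ℝ) (hm : AEMeasurable h)
    (hs : ∀ v : ℝ, Tendsto (fun u => h (u + v) - h u) atTop (nhds 0)) :
    ∃ U : ℝ, ∀ u, U ≤ u → ∀ v, 0 ≤ v → v ≤ 1 → |h (u + v) - h u| ≤ 2 := by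
  set φ : ℝ → ℝ → ℝ := fun u s => min |h (u + s) - h u| 1 with hφ
  have hφ0 : ∀ u s, 0 ≤ φ u s := fun u s => le_min (abs_nonneg _) zero_le_one
  have hφ1 : ∀ u s, φ u s ≤ 1 := fun u s => min_le_right _ _
  have hφm : ∀ u, AEStronglyMeasurable (φ u) volume := by
    intro u
    have h1 : AEMeasurable (fun s => h (u + s)) volume :=
      hm.comp_quasiMeasurePreserving (measurePreserving_add_left volume u).quasiMeasurePreserving
    have h2 : AEMeasurable (φ u) volume :=
      ((h1.sub_const (h u)).norm).min aemeasurable_const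
    exact h2.aestronglyMeasurable
  have hφi : ∀ u a b, IntervalIntegrable (φ u) volume a b := by
    intro u a b
    refine (intervalIntegrable_const (c := (1:ℝ))).mono_fun (hφm u).restrict ?_
    refine Eventually.of_forall fun s => ?_
    beta_reduce
    rw [norm_of_nonneg (hφ0 u s)]; simpa using hφ1 u s
  have hlim : Tendsto (fun u => ∫ s in (0:ℝ)..2, φ u s) atTop (nhds (∫ s in (0:ℝ)..2, (0:ℝ))) := by
    refine intervalIntegral.tendsto_integral_filter_of_dominated_convergence (fun _ => (1:ℝ)) ?_ ?_ ?_ ?_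
    · exact Eventually.of_forall fun u => (hφm u).restrict
    · refine Eventually.of_forall fun u => Eventually.of_forall fun s _ => ?_
      rw [norm_of_nonneg (hφ0 u s)]; exact hφ1 u s
    · exact intervalIntegrable_const
    · refine Eventually.of_forall fun s _ => ?_
      have := ((hs s).abs).min (tendsto_const_nhds (x := (1:ℝ)))
      simpa using this
  simp only [intervalIntegral.integral_zero] at hlim
  obtain ⟨U, hU⟩ := eventually_atTop.1 (hlim.eventually (gt_mem_nhds (show (0:ℝ) < 1/2 by norm_num)))
  refine ⟨U, fun u hu v hv0 hv1 => ?_⟩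
  have e1 : ∫ s in (1:ℝ)..2, φ u s ≤ ∫ s in (0:ℝ)..2, φ u s :=
    intervalIntegral.integral_mono_interval (by norm_num) (by norm_num) (by norm_num)
      (Eventually.of_forall fun s => hφ0 u s) (hφi _ _ _)
  have e2 : ∫ s in (1:ℝ)..2, φ (u+v) (s - v) ≤ ∫ s in (0:ℝ)..2, φ (u+v) s := by
    rw [intervalIntegral.integral_comp_sub_right (fun s => φ (u+v) s)]
    exact intervalIntegral.integral_mono_interval (by linarith) (by linarith) (by linarith)
      (Eventually.of_forall fun s => hφ0 _ s) (hφi _ _ _)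
  have hi2 : IntervalIntegrable (fun s => φ (u+v) (s - v)) volume 1 2 := by
    have := (hφi (u+v) (1-v) (2-v)).comp_sub_right v
    simpa using this
  have e3 : ∫ s in (1:ℝ)..2, min |h (u + v) - h u| 1 ≤ ∫ s in (1:ℝ)..2, (φ u s + φ (u+v) (s - v)) := by
    refine intervalIntegral.integral_mono_on (by norm_num) intervalIntegrable_const
      ((hφi _ _ _).add hi2) ?_
    intro s _
    simp only [hφ]
    have : u + v + (s - v) = u + s := by ring
    rw [this]
    have t := abs_sub_le (h (u+v)) (h (u+s)) (h u)
    rw [abs_sub_comm (h (u+v)) (h (u+s))] at t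
    have p1 := abs_nonneg (h (u+s) - h u)
    have p2 := abs_nonneg (h (u+s) - h (u+v))
    rcases le_total |h (u+s) - h u| 1 with a | a <;>
    rcases le_total |h (u+s) - h (u+v)| 1 with b | b <;>
    simp only [min_eq_left, min_eq_right, a, b]
    · exact (min_le_left _ _).trans (by linarith)
    · exact (min_le_right _ _).trans (by linarith)
    · exact (min_le_right _ _).trans (by linarith)
    · exact (min_le_right _ _).trans (by linarith)
  rw [intervalIntegral.integral_add (hφi _ _ _) hi2] at e3
  have e4 := hU u hu
  have e5 := hU (u+v) (by linarith)
  rw [intervalIntegral.integral_const] at e3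
  have e6 : min |h (u + v) - h u| 1 < 1 := by
    have e7 : ((2:ℝ) - 1) • min |h (u + v) - h u| 1 = min |h (u + v) - h u| 1 := by norm_num
    rw [e7] at e3
    linarith
  rcases min_lt_iff.1 e6 with e | e
  · linarith
  · exact absurd e (lt_irrefl _)

lemma potter (ℓ : ℝ → ℝ) (hℓpos : ∀ x : ℝ, 0 < x → 0 < ℓ x)
    (hℓsv : ∀ c : ℝ, 0 < c → Tendsto (fun t => ℓ (c * t) / ℓ t) atTop (nhds 1))
    (hm : AEMeasurable (fun u => ℓ (exp u))) :
    ∃ X : ℝ, 0 < X ∧ ∀ x z, X ≤ x → x ≤ z → ℓ x ≤ exp 2 * (z / x) ^ 2 * ℓ z := by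
  obtain ⟨U, hU⟩ := uct_add (fun u => log (ℓ (exp u))) (measurable_log.comp_aemeasurable hm) (by
    intro v
    have h1 := (hℓsv (exp v) (exp_pos v)).comp tendsto_exp_atTop
    have h2 := h1.log one_ne_zero
    rw [log_one] at h2
    refine h2.congr fun u => ?_
    simp only [Function.comp]
    rw [← exp_add, log_div (hℓpos _ (exp_pos _)).ne' (hℓpos _ (exp_pos _)).ne', add_comm v u])
  have key : ∀ n : ℕ, ∀ u, U ≤ u → ∀ v : ℝ, 0 ≤ v → v ≤ n →
      log (ℓ (exp u)) ≤ log (ℓ (exp (u + v))) + 2 * v + 2 := by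
    intro n
    induction n with
    | zero =>
      intro u _ v hv hv'
      have : v = 0 := le_antisymm (by simpa using hv') hv
      subst this; simp
    | succ n ih =>
      intro u hu v hv hv'
      push_cast at hv'
      rcases le_total v 1 with h1 | h1
      · have := (abs_le.1 (hU u hu v hv h1)).1
        linarith
      · have a := (abs_le.1 (hU u hu 1 zero_le_one le_rfl)).1
        have b := ih (u+1) (by linarith) (v-1) (by linarith) (by linarith)
        rw [show u + 1 + (v - 1) = u + v by ring] at b
        linarith
  refine ⟨exp U, exp_pos U, fun x z hx hz => ?_⟩
  have hx0 : 0 < x := (exp_pos U).trans_le hx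
  have hz0 := hx0.trans_le hz
  have hzx : 1 ≤ z / x := (one_le_div hx0).2 hz
  obtain ⟨n, hn⟩ := exists_nat_ge (log (z / x))
  have := key n (log x) ((le_log_iff_exp_le hx0).2 hx) (log (z/x)) (log_nonneg hzx) hn
  rw [exp_add, exp_log hx0, exp_log (by positivity), mul_div_cancel₀ _ hx0.ne'] at this
  have lz := hℓpos z hz0
  rw [← log_le_log_iff (hℓpos x hx0) (by positivity), log_mul (by positivity) lz.ne',
    log_mul (by positivity) (by positivity), log_exp, log_pow]
  push_cast; linarith

lemma aem_of (ℓ : ℝ → ℝ) (t p b : ℝ) (ht : 0 < t) (hb : 0 < b)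
    (hi : IntegrableOn (fun y => y ^ p * exp (-y) * ℓ (t / y)) (Ioi b)) :
    AEMeasurable (fun u => ℓ (exp u)) (volume.restrict (Iio (log (t / b)))) := by
  have him : (fun u => t * exp (-u)) '' (Iio (log (t / b))) = Ioi b := by
    ext y
    simp only [mem_image, mem_Iio, mem_Ioi]
    constructor
    · rintro ⟨u, hu, rfl⟩
      have := (lt_log_iff_exp_lt (by positivity)).1 hu
      rw [lt_div_iff₀ hb] at this
      rw [exp_neg, ← div_eq_mul_inv, lt_div_iff₀ (exp_pos u)]; linarith
    · intro hy
      have hy0 := hb.trans hy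
      refine ⟨log (t / y), log_lt_log (by positivity) (div_lt_div_of_pos_left ht hb hy), ?_⟩
      rw [exp_neg, exp_log (by positivity)]; field_simp
  rw [← him, integrableOn_image_iff_integrableOn_abs_deriv_smul (f' := fun u => t * (exp (-u) * (-1)))
    measurableSet_Iio (fun x _ => (((hasDerivAt_neg x).exp).const_mul t).hasDerivWithinAt)] at hi
  · have h1 := hi.aestronglyMeasurable.aemeasurable
    have h2 : Measurable (fun u : ℝ => (|t * (exp (-u) * (-1))| * ((t * exp (-u)) ^ p * exp (-(t * exp (-u)))))⁻¹) := by
      fun_prop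
    refine (h2.aemeasurable.mul h1).congr (Eventually.of_forall fun u => ?_)
    simp only [Pi.mul_apply, smul_eq_mul]
    have e : t / (t * exp (-u)) = exp u := by rw [exp_neg]; field_simp
    rw [e]
    have : 0 < |t * (exp (-u) * (-1))| := abs_pos.2 (by simp [ht.ne'])
    have : 0 < (t * exp (-u)) ^ p := by positivity
    field_simp
  · intro a _ b _ hab
    simpa [ht.ne'] using hab

lemma gamma_lower (q w : ℝ) (hq : 0 < q) (hw : 0 ≤ w) : w ^ q * exp (-w) ≤ q * Gamma q := by
  rw [← Gamma_add_one hq.ne', Gamma_eq_integral (by linarith)]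
  have hi := GammaIntegral_convergent (s := q + 1) (by linarith)
  calc w ^ q * exp (-w) = ∫ y in Ioi w, w ^ q * exp (-y) := by
        rw [integral_const_mul, integral_exp_neg_Ioi]
    _ ≤ ∫ y in Ioi w, exp (-y) * y ^ (q + 1 - 1) := by
        refine setIntegral_mono_on ?_ (hi.mono_set (Ioi_subset_Ioi hw)) measurableSet_Ioi ?_
        · exact (integrableOn_exp_neg_Ioi w).const_mul _
        · intro y hy
          rw [mul_comm, add_sub_cancel_right]
          have := rpow_le_rpow hw (le_of_lt hy) hq.le
          gcongr
    _ ≤ _ := by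
        refine setIntegral_mono_set hi ?_ (Ioi_subset_Ioi hw).eventuallyLE
        refine (ae_restrict_iff' measurableSet_Ioi).2 (Eventually.of_forall fun y hy => ?_)
        have : 0 < y := hy
        simp only [Pi.zero_apply]; positivity

lemma gamma_mom (q : ℝ) (hq : 0 < q) :
    IntegrableOn (fun y : ℝ => y ^ (q + 1) * exp (-y) * (y - q) ^ 2) (Ioi 0) ∧
    ∫ y in Ioi 0, y ^ (q + 1) * exp (-y) * (y - q) ^ 2 = q * (q + 1) * (q + 6) * Gamma q := by
  have i2 := GammaIntegral_convergent (s := q + 2) (by linarith)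
  have i3 := GammaIntegral_convergent (s := q + 3) (by linarith)
  have i4 := GammaIntegral_convergent (s := q + 4) (by linarith)
  have g2 := Gamma_eq_integral (s := q + 2) (by linarith)
  have g3 := Gamma_eq_integral (s := q + 3) (by linarith)
  have g4 := Gamma_eq_integral (s := q + 4) (by linarith)
  have r1 : Gamma (q + 1) = q * Gamma q := Gamma_add_one hq.ne'
  have r2 : Gamma (q + 2) = (q + 1) * Gamma (q + 1) := by
    rw [← Gamma_add_one (by linarith)]; ring_nf
  have r3 : Gamma (q + 3) = (q + 2) * Gamma (q + 2) := by
    rw [← Gamma_add_one (by linarith)]; ring_nf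
  have r4 : Gamma (q + 4) = (q + 3) * Gamma (q + 3) := by
    rw [← Gamma_add_one (by linarith)]; ring_nf
  have e : EqOn (fun y : ℝ => y ^ (q + 1) * exp (-y) * (y - q) ^ 2)
    (fun y => exp (-y) * y ^ (q + 4 - 1) + (-2 * q) * (exp (-y) * y ^ (q + 3 - 1)) + q ^ 2 * (exp (-y) * y ^ (q + 2 - 1))) (Ioi 0) := by
    intro y hy
    have hy : 0 < y := hy
    simp only
    rw [show q + 4 - 1 = q + 1 + 2 by ring, show q + 3 - 1 = q + 1 + 1 by ring, show q + 2 - 1 = q + 1 by ring,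
      rpow_add hy (q+1) 2, rpow_add hy (q+1) 1, rpow_one, rpow_two]
    ring
  have i := (i4.add (i3.const_mul (-2 * q))).add (i2.const_mul (q ^ 2))
  constructor
  · exact IntegrableOn.congr_fun i e.symm measurableSet_Ioi
  · have i' : IntegrableOn (fun y : ℝ => exp (-y) * y ^ (q + 4 - 1) + (-2 * q) * (exp (-y) * y ^ (q + 3 - 1))) (Ioi 0) :=
      i4.add (i3.const_mul (-2 * q))
    rw [setIntegral_congr_fun measurableSet_Ioi e, integral_add i' (i2.const_mul (q ^ 2)),
      integral_add i4 (i3.const_mul (-2 * q)), integral_const_mul, integral_const_mul, ← g2, ← g3, ← g4, r4, r3, r2, r1]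
    ring

lemma bound (ℓ : ℝ → ℝ) (hℓpos : ∀ x : ℝ, 0 < x → 0 < ℓ x) (X : ℝ) (hX : 0 < X)
    (hP : ∀ x z, X ≤ x → x ≤ z → ℓ x ≤ exp 2 * (z / x) ^ 2 * ℓ z) (A : ℝ) (hA : 1 < A)
    (t0 q0 : ℝ) (ht0 : 0 < t0)
    (hi0 : IntegrableOn (fun y => y ^ (q0 - 1) * exp (-y) * ℓ (t0 / y)) (Ioi (t0 / X)))
    (t Q : ℝ) (ht : 0 < t) (hQ : 0 < Q) (hp : 0 ≤ Q - q0) (hps : Q - q0 ≤ t / X * (1 - t0 / t)) :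
    ∫ y in Ioi (A * Q), y ^ (Q - 1) * exp (-y) * ℓ (t / y) ≤
      exp 2 * ℓ (t / Q) / (Q ^ 4 * (A - 1) ^ 2) * (Q * (Q + 1) * (Q + 6) * Gamma Q) +
      (t / X) ^ Q * exp (-(t / X)) * ((t0 / X) ^ (-q0) * exp (t0 / X) *
        ∫ y in Ioi (t0 / X), y ^ (q0 - 1) * exp (-y) * ℓ (t0 / y)) := by
  set F0 : ℝ → ℝ := fun y => y ^ (q0 - 1) * exp (-y) * ℓ (t0 / y) with hF0
  set F1 : ℝ → ℝ := (Ioi (t0 / X)).indicator F0 with hF1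
  have hF1i : Integrable F1 := (integrable_indicator_iff measurableSet_Ioi).2 hi0
  have hw0 : 0 < t0 / X := by positivity
  have hw : 0 < t / X := by positivity
  have hF1n : ∀ y, 0 ≤ F1 y := by
    intro y
    refine indicator_nonneg (fun y hy => ?_) y
    have hy : 0 < y := hw0.trans hy
    have := hℓpos (t0 / y) (by positivity)
    simp only [hF0]; positivity
  obtain ⟨gi, ge⟩ := gamma_mom Q hQ
  set c1 := exp 2 * ℓ (t / Q) / (Q ^ 4 * (A - 1) ^ 2) with hc1
  set c2 := (t / t0) ^ (q0 - 1) * (t / X) ^ (Q - q0) * exp (-(t / X)) * exp (t0 / X) with hc2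
  have hlQ := hℓpos (t / Q) (by positivity)
  have hA1 : 0 < A - 1 := by linarith
  have hc1p : 0 < c1 := by positivity
  have hc2p : 0 < c2 := by positivity
  have hG1 : IntegrableOn (fun y => c1 * (y ^ (Q + 1) * exp (-y) * (y - Q) ^ 2)) (Ioi 0) := gi.const_mul c1
  have hG2 : Integrable (fun y => c2 * F1 (t0 / t * y)) :=
    (hF1i.comp_mul_left' (by positivity : t0 / t ≠ 0)).const_mul c2
  have hAQ : 0 < A * Q := by positivity
  have hsub : Ioi (A * Q) ⊆ Ioi 0 := Ioi_subset_Ioi hAQ.le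
  have hG1' := hG1.mono_set hsub
  have hG2' : IntegrableOn (fun y => c2 * F1 (t0 / t * y)) (Ioi (A * Q)) := hG2.integrableOn
  have hG1n : ∀ y ∈ Ioi (0:ℝ), 0 ≤ c1 * (y ^ (Q + 1) * exp (-y) * (y - Q) ^ 2) := by
    intro y hy
    have : 0 < y := hy
    positivity
  calc _ ≤ ∫ y in Ioi (A * Q), (c1 * (y ^ (Q + 1) * exp (-y) * (y - Q) ^ 2) + c2 * F1 (t0 / t * y)) := by
        refine integral_mono_of_nonneg ?_ (hG1'.add hG2') ?_
        · refine (ae_restrict_iff' measurableSet_Ioi).2 (Eventually.of_forall fun y hy => ?_)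
          have hy : 0 < y := hsub hy
          have := hℓpos (t / y) (by positivity)
          simp only [Pi.zero_apply]; positivity
        · refine (ae_restrict_iff' measurableSet_Ioi).2 (Eventually.of_forall fun y hy => ?_)
          have hy0 : 0 < y := hsub hy
          have hyA : A * Q < y := hy
          have hl := hℓpos (t / y) (by positivity)
          beta_reduce
          rcases le_or_gt y (t / X) with h | h
          · have h1 : ℓ (t / y) ≤ exp 2 * (y / Q) ^ 2 * ℓ (t / Q) := by
              have := hP (t / y) (t / Q) (by rw [le_div_iff₀ hy0]; rw [le_div_iff₀ hX] at h; linarith)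
                (div_le_div_of_nonneg_left ht.le hQ (by nlinarith))
              rwa [show t / Q / (t / y) = y / Q by field_simp] at this
            have h2 : 1 ≤ (y - Q) ^ 2 / (Q ^ 2 * (A - 1) ^ 2) := by
              rw [one_le_div (by positivity), ← mul_pow]
              exact pow_le_pow_left₀ (by positivity) (by linarith) 2
            have h3 : y ^ (Q - 1) * y ^ 2 = y ^ (Q + 1) := by
              rw [← rpow_two, ← rpow_add hy0]; ring_nf
            have h4 : 0 ≤ c2 * F1 (t0 / t * y) := mul_nonneg hc2p.le (hF1n _)
            refine le_trans ?_ (le_add_of_nonneg_right h4)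
            calc y ^ (Q - 1) * exp (-y) * ℓ (t / y)
                ≤ y ^ (Q - 1) * exp (-y) * (exp 2 * (y / Q) ^ 2 * ℓ (t / Q)) := by gcongr
              _ ≤ y ^ (Q - 1) * exp (-y) * (exp 2 * (y / Q) ^ 2 * ℓ (t / Q)) * ((y - Q) ^ 2 / (Q ^ 2 * (A - 1) ^ 2)) :=
                  le_mul_of_one_le_right (by positivity) h2
              _ = c1 * ((y ^ (Q - 1) * y ^ 2) * exp (-y) * (y - Q) ^ 2) := by
                  rw [hc1]; field_simp
              _ = _ := by rw [h3]
          · refine le_trans ?_ (le_add_of_nonneg_left (hG1n y (hsub hy)))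
            have hm : t0 / t * y ∈ Ioi (t0 / X) := by
              have : t0 / t * (t / X) < t0 / t * y := by gcongr
              rw [show t0 / t * (t / X) = t0 / X by field_simp] at this
              exact this
            rw [hF1, indicator_of_mem hm]
            simp only [hF0]
            rw [show t0 / (t0 / t * y) = t / y by field_simp, ← mul_assoc]
            refine mul_le_mul_of_nonneg_right ?_ hl.le
            set w := t / X with hwdef
            have hv : 1 < y / w := (one_lt_div hw).2 h
            have k1 : (y / w) ^ (Q - q0) ≤ exp (w * (1 - t0 / t) * (y / w - 1)) := by
              calc (y / w) ^ (Q - q0) ≤ (exp (y / w - 1)) ^ (Q - q0) := by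
                    refine rpow_le_rpow (by positivity) ?_ hp
                    have := add_one_le_exp (y / w - 1); linarith
                _ = exp ((y / w - 1) * (Q - q0)) := by rw [← exp_mul]
                _ ≤ _ := by
                    refine exp_le_exp.2 ?_
                    rw [mul_comm]
                    exact mul_le_mul_of_nonneg_right hps (by linarith)
            have k2 : y ^ (Q - q0) ≤ w ^ (Q - q0) * exp (w * (1 - t0 / t) * (y / w - 1)) := by
              rw [div_rpow hy0.le hw.le, div_le_iff₀ (by positivity)] at k1
              linarith
            have k3 : y ^ (Q - 1) = y ^ (Q - q0) * y ^ (q0 - 1) := by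
              rw [← rpow_add hy0]; ring_nf
            have k4 : (t / t0) ^ (q0 - 1) * (t0 / t * y) ^ (q0 - 1) = y ^ (q0 - 1) := by
              rw [← mul_rpow (by positivity) (by positivity)]
              congr 1; field_simp
            have k5 : exp (w * (1 - t0 / t) * (y / w - 1)) * exp (-y) = exp (-w) * exp (t0 / X) * exp (-(t0 / t * y)) := by
              rw [← exp_add, ← exp_add, ← exp_add]
              congr 1
              rw [hwdef]; field_simp; ring
            calc y ^ (Q - 1) * exp (-y) = y ^ (Q - q0) * (y ^ (q0 - 1) * exp (-y)) := by rw [k3]; ring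
              _ ≤ (w ^ (Q - q0) * exp (w * (1 - t0 / t) * (y / w - 1))) * (y ^ (q0 - 1) * exp (-y)) := by
                  gcongr
              _ = w ^ (Q - q0) * y ^ (q0 - 1) * (exp (w * (1 - t0 / t) * (y / w - 1)) * exp (-y)) := by ring
              _ = c2 * ((t0 / t * y) ^ (q0 - 1) * exp (-(t0 / t * y))) := by
                  rw [k5, ← k4, hc2]; ring
              _ = _ := by ring
    _ = (∫ y in Ioi (A * Q), c1 * (y ^ (Q + 1) * exp (-y) * (y - Q) ^ 2)) + ∫ y in Ioi (A * Q), c2 * F1 (t0 / t * y) :=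
        integral_add hG1' hG2'
    _ ≤ (∫ y in Ioi 0, c1 * (y ^ (Q + 1) * exp (-y) * (y - Q) ^ 2)) + ∫ y, c2 * F1 (t0 / t * y) := by
        refine add_le_add ?_ ?_
        · exact setIntegral_mono_set hG1 ((ae_restrict_iff' measurableSet_Ioi).2 (Eventually.of_forall hG1n))
            hsub.eventuallyLE
        · exact setIntegral_le_integral hG2 (Eventually.of_forall fun y => mul_nonneg hc2p.le (hF1n _))
    _ = _ := by
        rw [integral_const_mul, integral_const_mul, ge, Measure.integral_comp_mul_left, hF1,
          integral_indicator measurableSet_Ioi, abs_of_pos (by positivity), smul_eq_mul]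
        congr 1
        have m1 : (t / t0) ^ (q0 - 1) * (t0 / t)⁻¹ = (t / t0) ^ q0 := by
          rw [inv_div, ← rpow_add_one (by positivity)]; ring_nf
        have m2 : (t / t0) ^ q0 = (t / X) ^ q0 * (t0 / X) ^ (-q0) := by
          rw [rpow_neg hw0.le, ← div_eq_mul_inv, ← div_rpow hw.le hw0.le]
          congr 1; field_simp
        have m3 : (t / X) ^ Q = (t / X) ^ (Q - q0) * (t / X) ^ q0 := by
          rw [← rpow_add hw]; ring_nf
        calc _ = ((t / t0) ^ (q0 - 1) * (t0 / t)⁻¹) * ((t / X) ^ (Q - q0) * exp (-(t / X)) * exp (t0 / X)) * ∫ y in Ioi (t0 / X), F0 y := by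
              rw [hc2]; ring
          _ = _ := by rw [m1, m2, m3]; ring

/-- Equation (3.3): for `ℓ` positive, locally bounded and slowly varying, `q` of class `𝒬`
and `A > 1`, the upper part of the integral is negligible:
`∫_{A q(t)}^∞ y^(q(t)-1) e^(-y) ℓ(t/y) dy / (Γ(q(t)) ℓ(t/q(t))) → 0` as `t → ∞`. -/
theorem stmt_8
    (ℓ : ℝ → ℝ)
    (hℓpos : ∀ x : ℝ, 0 < x → 0 < ℓ x)
    (hℓloc : ∀ a b : ℝ, 0 < a → BddAbove (ℓ '' Set.Icc a b))
    (hℓsv : ∀ c : ℝ, 0 < c → Tendsto (fun t => ℓ (c * t) / ℓ t) atTop (nhds 1))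
    (q : ℝ → ℝ)
    (hqpos : ∀ t : ℝ, 0 < t → 0 < q t)
    (hqtop : Tendsto q atTop atTop)
    (hqsmall : Tendsto (fun t => q t / t) atTop (nhds 0))
    (A : ℝ) (hA : 1 < A) :
    Tendsto (fun t =>
      (∫ y in Set.Ioi (A * q t), y ^ (q t - 1) * Real.exp (-y) * ℓ (t / y)) /
        (Real.Gamma (q t) * ℓ (t / q t))) atTop (nhds 0) := by
  by_cases hfr : ∃ᶠ t in atTop, IntegrableOn (fun y => y ^ (q t - 1) * Real.exp (-y) * ℓ (t / y)) (Ioi (A * q t))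
  swap
  · rw [not_frequently] at hfr
    refine tendsto_const_nhds.congr' ?_
    filter_upwards [hfr] with t h
    rw [integral_undef h, zero_div]
  have hA0 : 0 < A := by linarith
  have hsm : ∀ ε : ℝ, 0 < ε → ∀ᶠ t in atTop, 0 < t ∧ q t ≤ ε * t := by
    intro ε hε
    filter_upwards [hqsmall.eventually (gt_mem_nhds hε), eventually_gt_atTop 0] with t h1 h2
    exact ⟨h2, ((div_lt_iff₀ h2).1 h1).le⟩
  have hm : AEMeasurable (fun u => ℓ (exp u)) := by
    have : AEMeasurable (fun u => ℓ (exp u)) (volume.restrict (⋃ n : ℕ, Iio (n : ℝ))) := by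
      rw [aemeasurable_iUnion_iff]
      intro n
      obtain ⟨t, hi, ht, hq⟩ := (hfr.and_eventually (hsm (exp (-n) / A) (by positivity))).exists
      have hqt := hqpos t ht
      refine (aem_of ℓ t _ (A * q t) ht (by positivity) hi).mono_set (Iio_subset_Iio ?_)
      rw [le_log_iff_exp_le (by positivity), le_div_iff₀ (by positivity)]
      calc exp n * (A * q t) ≤ exp n * (A * (exp (-n) / A * t)) := by gcongr
        _ = t := by rw [exp_neg]; field_simp
    rwa [show (⋃ n : ℕ, Iio (n : ℝ)) = univ from by
      ext x; simpa using exists_nat_gt x, Measure.restrict_univ] at this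
  obtain ⟨X, hX, hP⟩ := potter ℓ hℓpos hℓsv hm
  obtain ⟨t0, hi0, ht0, hq0⟩ := (hfr.and_eventually (hsm (1 / (A * X)) (by positivity))).exists
  have hi0' := hi0.mono_set (Ioi_subset_Ioi (show A * q t0 ≤ t0 / X by
    calc A * q t0 ≤ A * (1 / (A * X) * t0) := by gcongr
      _ = t0 / X := by field_simp))
  set D := (t0 / X) ^ (-q t0) * exp (t0 / X) *
        ∫ y in Ioi (t0 / X), y ^ (q t0 - 1) * exp (-y) * ℓ (t0 / y) with hD
  have hD0 : 0 ≤ D := by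
    have : 0 ≤ ∫ y in Ioi (t0 / X), y ^ (q t0 - 1) * exp (-y) * ℓ (t0 / y) := by
      refine setIntegral_nonneg measurableSet_Ioi fun y hy => ?_
      have hy : 0 < y := lt_trans (by positivity) hy
      have := hℓpos (t0 / y) (by positivity)
      positivity
    positivity
  have hlX := hℓpos X hX
  set c := D * exp 2 / ℓ X with hc
  have hc0 : 0 ≤ c := by positivity
  have hA1 : 0 < A - 1 := by linarith
  have hlim : Tendsto (fun t => exp 2 / (A - 1) ^ 2 * (14 * (q t)⁻¹) +
      c * (16 * ((t / X / 4) ^ 2 * exp (-(t / X / 4))))) atTop (nhds 0) := by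
    have l1 := (((tendsto_inv_atTop_zero.comp hqtop).const_mul 14).const_mul (exp 2 / (A - 1) ^ 2))
    have l2 : Tendsto (fun t : ℝ => t / X / 4) atTop atTop :=
      (tendsto_id.atTop_div_const hX).atTop_div_const (by norm_num)
    have l3 := ((((tendsto_pow_mul_exp_neg_atTop_nhds_zero 2).comp l2).const_mul 16).const_mul c)
    simpa using l1.add l3
  refine squeeze_zero' ?_ ?_ hlim
  · filter_upwards [eventually_gt_atTop 0] with t ht
    have hqt := hqpos t ht
    have := hℓpos (t / q t) (by positivity)
    have hg := Gamma_pos_of_pos hqt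
    refine div_nonneg (setIntegral_nonneg measurableSet_Ioi fun y hy => ?_) (by positivity)
    have hy : 0 < y := lt_trans (by positivity) hy
    have := hℓpos (t / y) (by positivity)
    positivity
  · filter_upwards [hsm (1 / (4 * X)) (by positivity), hqtop.eventually_ge_atTop 1,
      hqtop.eventually_ge_atTop (q t0), eventually_ge_atTop (2 * t0)] with t ⟨ht, hs⟩ hq1 hqq htt
    have hqt := hqpos t ht
    have hq00 := hqpos t0 ht0
    set Q := q t with hQ
    set w := t / X with hw
    have hw0 : 0 < w := by positivity
    have hs' : Q ≤ w / 4 := by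
      calc Q ≤ 1 / (4 * X) * t := hs
        _ = w / 4 := by rw [hw]; field_simp
    have hlQ := hℓpos (t / Q) (by positivity)
    have hg := Gamma_pos_of_pos hqt
    have hb := bound ℓ hℓpos X hX hP A hA t0 (q t0) ht0 hi0' t Q ht hqt (by linarith) (by
      have : t0 / t ≤ 1 / 2 := by rw [div_le_div_iff₀ ht (by norm_num)]; linarith
      have : w * (1 / 2) ≤ w * (1 - t0 / t) := by gcongr; linarith
      linarith)
    rw [← hD, ← hw] at hb
    rw [div_le_iff₀ (by positivity)]
    refine hb.trans ?_
    rw [add_mul]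
    refine add_le_add ?_ ?_
    · have : Q * (Q + 1) * (Q + 6) ≤ 14 * Q ^ 3 := by
        calc Q * (Q + 1) * (Q + 6) ≤ Q * (2 * Q) * (7 * Q) := by gcongr <;> linarith
          _ = 14 * Q ^ 3 := by ring
      calc exp 2 * ℓ (t / Q) / (Q ^ 4 * (A - 1) ^ 2) * (Q * (Q + 1) * (Q + 6) * Gamma Q)
          ≤ exp 2 * ℓ (t / Q) / (Q ^ 4 * (A - 1) ^ 2) * (14 * Q ^ 3 * Gamma Q) := by gcongr
        _ = _ := by field_simp
    · have g1 := gamma_lower Q (w / 2) hqt (by positivity)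
      have p1 := hP X (t / Q) le_rfl (by
        rw [le_div_iff₀ hqt]
        have : Q * X ≤ w * X := by gcongr; linarith
        rw [hw, div_mul_cancel₀ _ hX.ne'] at this
        linarith)
      rw [show t / Q / X = w / Q by rw [hw]; field_simp] at p1
      have g2 : w ^ Q * exp (-w) ≤ Q * Gamma Q * exp (-(w / 4)) := by
        have two : (2:ℝ) ^ Q ≤ exp (w / 4) := by
          calc (2:ℝ) ^ Q ≤ (exp 1) ^ Q := by
                refine rpow_le_rpow (by norm_num) ?_ hqt.le
                have := add_one_le_exp (1:ℝ); linarith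
            _ = exp Q := by rw [← exp_mul, one_mul]
            _ ≤ _ := exp_le_exp.2 hs'
        calc w ^ Q * exp (-w) = (w / 2) ^ Q * exp (-(w / 2)) * ((2:ℝ) ^ Q * exp (-(w / 2))) := by
              have e1 : w ^ Q = (w / 2) ^ Q * 2 ^ Q := by
                rw [← mul_rpow (by positivity) (by norm_num)]; congr 1; ring
              have e2 : exp (-w) = exp (-(w / 2)) * exp (-(w / 2)) := by
                rw [← exp_add]; congr 1; ring
              rw [e1, e2]; ring
          _ ≤ (Q * Gamma Q) * (exp (w / 4) * exp (-(w / 2))) := by gcongr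
          _ = _ := by rw [← exp_add]; congr 2; ring
      have p2 : 1 ≤ exp 2 * (w / Q) ^ 2 * ℓ (t / Q) / ℓ X := (one_le_div hlX).2 p1
      calc w ^ Q * exp (-w) * D ≤ Q * Gamma Q * exp (-(w / 4)) * D := by gcongr
        _ ≤ Q * Gamma Q * exp (-(w / 4)) * D * (exp 2 * (w / Q) ^ 2 * ℓ (t / Q) / ℓ X) :=
            le_mul_of_one_le_right (by positivity) p2
        _ = c * (w ^ 2 * exp (-(w / 4))) * (Gamma Q * ℓ (t / Q)) * (1 / Q) := by
            rw [hc]; field_simp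
        _ ≤ c * (w ^ 2 * exp (-(w / 4))) * (Gamma Q * ℓ (t / Q)) :=
            mul_le_of_le_one_right (by positivity) ((div_le_one hqt).2 hq1)
        _ = _ := by ring
end

section
/- Let q : (0,∞) → (0,∞) satisfy q(t) → ∞ as t → ∞, and fix a constant A > 1. Then lim_{t→∞} (q(t))^{q(t)} [∫_A^∞ z^{q(t)} e^{−q(t) z} dz] / Γ(q(t)) = 0. -/
open MeasureTheory Set Filter Real

lemma aux_bound (A : ℝ) (hA : 1 < A) (Q : ℝ) (hQ : 0 < Q) :
    Q ^ Q * (∫ z in Set.Ioi A, z ^ Q * Real.exp (-(Q * z))) / Real.Gamma Q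
      ≤ A * Real.exp (-(Q * (A - 1 - Real.log A))) := by
  have hA0 : 0 < A := by linarith
  have hr : 0 < Q / A := by positivity
  have hG : 0 < Real.Gamma Q := Real.Gamma_pos_of_pos hQ
  have hI := Real.integral_rpow_mul_exp_neg_mul_Ioi (a := Q + 1) (r := Q / A) (by linarith) hr
  have hint : IntegrableOn (fun z : ℝ => z ^ (Q + 1 - 1) * Real.exp (-(Q / A * z))) (Ioi 0) := by
    apply Integrable.of_integral_ne_zero
    rw [hI]
    have := Real.Gamma_pos_of_pos (show 0 < Q + 1 by linarith)
    positivity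
  simp only [add_sub_cancel_right] at hI hint
  have hle : (∫ z in Set.Ioi A, z ^ Q * Real.exp (-(Q * z))) ≤
      Real.exp (-(Q * (A - 1))) * ((1 / (Q / A)) ^ (Q + 1) * Real.Gamma (Q + 1)) := by
    rw [← hI, ← integral_const_mul]
    refine le_trans (integral_mono_of_nonneg
      (g := fun z => Real.exp (-(Q * (A - 1))) * (z ^ Q * Real.exp (-(Q / A * z)))) ?_ ?_ ?_) ?_
    · refine (ae_restrict_iff' measurableSet_Ioi).2 (Eventually.of_forall fun z hz => ?_)
      have : 0 < z := hA0.trans hz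
      simp only [Pi.zero_apply]
      positivity
    · exact (hint.mono_set (Ioi_subset_Ioi hA0.le)).const_mul _
    · refine (ae_restrict_iff' measurableSet_Ioi).2 (Eventually.of_forall fun z hz => ?_)
      have hz0 : 0 < z := hA0.trans hz
      have hz' : A < z := hz
      have : Real.exp (-(Q * z)) ≤ Real.exp (-(Q * (A - 1))) * Real.exp (-(Q / A * z)) := by
        rw [← Real.exp_add]
        apply Real.exp_le_exp.2
        have h1 : Q * z - Q * (A - 1) - Q / A * z = Q / A * ((A - 1) * (z - A)) := by
          field_simp
          ring
        have h2 : 0 ≤ Q / A * ((A - 1) * (z - A)) :=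
          mul_nonneg hr.le (mul_nonneg (by linarith) (by linarith))
        linarith
      calc z ^ Q * Real.exp (-(Q * z))
          ≤ z ^ Q * (Real.exp (-(Q * (A - 1))) * Real.exp (-(Q / A * z))) := by gcongr
        _ = _ := by ring
    · apply setIntegral_mono_set (hint.const_mul _)
      · refine (ae_restrict_iff' measurableSet_Ioi).2 (Eventually.of_forall fun z hz => ?_)
        have : 0 < z := hz
        simp only [Pi.zero_apply]
        positivity
      · exact (Ioi_subset_Ioi hA0.le).eventuallyLE
  rw [div_le_iff₀ hG]
  refine (mul_le_mul_of_nonneg_left hle (by positivity)).trans (le_of_eq ?_)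
  have e1 : Real.exp (-(Q * (A - 1 - Real.log A))) = Real.exp (-(Q * (A - 1))) * A ^ Q := by
    rw [Real.rpow_def_of_pos hA0, ← Real.exp_add]
    congr 1
    ring
  rw [e1, Real.Gamma_add_one hQ.ne', one_div_div, Real.rpow_add_one (by positivity),
    Real.div_rpow hA0.le hQ.le]
  have : 0 < Q ^ Q := by positivity
  field_simp

/-- Equation (3.4): if `q(t) → ∞` and `A > 1`, then
`q(t)^(q(t)) ∫_A^∞ z^(q(t)) e^(-q(t) z) dz / Γ(q(t)) → 0` as `t → ∞`. -/
theorem stmt_9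
    (q : ℝ → ℝ) (hqpos : ∀ t : ℝ, 0 < t → 0 < q t)
    (hqtop : Tendsto q atTop atTop)
    (A : ℝ) (hA : 1 < A) :
    Tendsto (fun t =>
      q t ^ (q t) * (∫ z in Set.Ioi A, z ^ (q t) * Real.exp (-(q t * z))) /
        Real.Gamma (q t)) atTop (nhds 0) := by
  have hA0 : 0 < A := by linarith
  have hc : 0 < A - 1 - Real.log A := by
    have := Real.log_lt_sub_one_of_pos hA0 hA.ne'
    linarith
  have hlim : Tendsto (fun t => A * Real.exp (-(q t * (A - 1 - Real.log A)))) atTop (nhds 0) := by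
    have := (Real.tendsto_exp_neg_atTop_nhds_zero.comp (hqtop.atTop_mul_const hc)).const_mul A
    simpa [Function.comp_def] using this
  refine tendsto_of_tendsto_of_tendsto_of_le_of_le' tendsto_const_nhds hlim ?_ ?_
  · filter_upwards [eventually_gt_atTop 0] with t ht
    have hQ := hqpos t ht
    have hG : 0 < Real.Gamma (q t) := Real.Gamma_pos_of_pos hQ
    have : 0 ≤ ∫ z in Set.Ioi A, z ^ (q t) * Real.exp (-(q t * z)) := by
      refine setIntegral_nonneg measurableSet_Ioi fun z hz => ?_
      have : 0 < z := hA0.trans hz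
      positivity
    positivity
  · filter_upwards [eventually_gt_atTop 0] with t ht
    exact aux_bound A hA _ (hqpos t ht)
end

section
/- For every real A > 1 and every real q > 0, ∫_A^∞ z^q e^{−q z} dz ≤ (A e^{−A})^q · A / ((A − 1) q). -/
open MeasureTheory Set Filter Real

/-- Inequality (3.5): for every `A > 1` and `q > 0`,
`∫_A^∞ z^q e^(-qz) dz ≤ (A e^(-A))^q · A / ((A-1) q)`. -/
theorem stmt_10 (A q : ℝ) (hA : 1 < A) (hq : 0 < q) :
    (∫ z in Set.Ioi A, z ^ q * Real.exp (-(q * z))) ≤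
      (A * Real.exp (-A)) ^ q * A / ((A - 1) * q) := by
  have hA0 : 0 < A := by linarith
  have hA1 : 0 < A - 1 := by linarith
  have hc : -(q * (A - 1) / A) < 0 := by
    have : 0 < q * (A - 1) / A := by positivity
    linarith
  have hint := (integrableOn_exp_mul_Ioi hc A).const_mul (A ^ q * Real.exp (-q))
  have key : (∫ z in Set.Ioi A, z ^ q * Real.exp (-(q * z))) ≤
      ∫ z in Set.Ioi A, A ^ q * Real.exp (-q) * Real.exp (-(q * (A - 1) / A) * z) := by
    refine integral_mono_of_nonneg ?_ hint ?_
    · filter_upwards [ae_restrict_mem measurableSet_Ioi] with z hz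
      have hz0 : 0 < z := lt_trans hA0 hz
      simp only [Pi.zero_apply]
      positivity
    · filter_upwards [ae_restrict_mem measurableSet_Ioi] with z hz
      have hz0 : 0 < z := lt_trans hA0 hz
      have hlog : Real.log z - Real.log A ≤ z / A - 1 := by
        rw [← Real.log_div hz0.ne' hA0.ne']
        exact Real.log_le_sub_one_of_pos (by positivity)
      rw [Real.rpow_def_of_pos hz0, Real.rpow_def_of_pos hA0, ← Real.exp_add, ← Real.exp_add,
        ← Real.exp_add, Real.exp_le_exp]
      have h2 : -(q * (A - 1) / A) * z = q * (z / A) - q * z := by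
        field_simp
        ring
      rw [h2]
      nlinarith [mul_le_mul_of_nonneg_left hlog hq.le]
  refine key.trans (le_of_eq ?_)
  rw [integral_const_mul, integral_exp_mul_Ioi hc,
    Real.mul_rpow hA0.le (Real.exp_pos _).le, ← Real.exp_mul]
  have h3 : -(q * (A - 1) / A) * A = q + -A * q := by
    field_simp
    ring
  rw [h3, Real.exp_add, Real.exp_neg q]
  have := Real.exp_pos q
  field_simp
end

section
/- Let q : (0,∞) → (0,∞) satisfy q(t) → ∞ as t → ∞, and fix constants a, A with 0 < a < 1 < A. Then, as t → ∞, ∫_{a q(t)}^{A q(t)} y^{q(t)−1} e^{−y} dy ∼ Γ(q(t)). -/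
open MeasureTheory Set Filter Real

lemma aux_bounds (a A s d : ℝ) (ha : 0 < a) (hs : 0 < s) (hd : 0 < d)
    (hda : d ≤ 1 - a) (hdA : d ≤ A - 1) :
    1 - 1 / d ^ 2 * (1 / s) ≤
      (∫ y in Set.Ioc (a * s) (A * s), y ^ (s - 1) * Real.exp (-y)) / Real.Gamma s ∧
    (∫ y in Set.Ioc (a * s) (A * s), y ^ (s - 1) * Real.exp (-y)) / Real.Gamma s ≤ 1 := by
  have hG := Real.Gamma_pos_of_pos hs
  have i0 := Real.GammaIntegral_convergent hs
  have i1 := Real.GammaIntegral_convergent (by linarith : 0 < s + 1)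
  have i2 := Real.GammaIntegral_convergent (by linarith : 0 < s + 1 + 1)
  have g0 := Real.Gamma_eq_integral hs
  have g1 := Real.Gamma_eq_integral (by linarith : 0 < s + 1)
  have g2 := Real.Gamma_eq_integral (by linarith : 0 < s + 1 + 1)
  rw [Real.Gamma_add_one (by linarith), Real.Gamma_add_one hs.ne'] at g2
  rw [Real.Gamma_add_one hs.ne'] at g1
  simp only [add_sub_cancel_right] at i1 i2 g1 g2
  have hcomm : ∀ y : ℝ, y ^ (s - 1) * Real.exp (-y) = Real.exp (-y) * y ^ (s - 1) :=
    fun y => mul_comm _ _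
  simp only [hcomm]
  have hsub : Set.Ioc (a * s) (A * s) ⊆ Set.Ioi 0 := fun y hy =>
    lt_trans (mul_pos ha hs) hy.1
  rw [le_div_iff₀ hG, div_le_iff₀ hG, one_mul]
  constructor
  · have key : (∫ y in Set.Ioi (0:ℝ), (Real.exp (-y) * y ^ (s - 1) - 1 / (d * s) ^ 2 *
        (Real.exp (-y) * y ^ (s + 1) - 2 * s * (Real.exp (-y) * y ^ s)
          + s ^ 2 * (Real.exp (-y) * y ^ (s - 1)))))
        ≤ ∫ y in Set.Ioi (0:ℝ), (Set.Ioc (a * s) (A * s)).indicator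
            (fun y => Real.exp (-y) * y ^ (s - 1)) y := by
      refine setIntegral_mono_on ?_ ?_ measurableSet_Ioi ?_
      · exact i0.sub (((i2.sub (i1.const_mul _)).add (i0.const_mul _)).const_mul _)
      · exact i0.indicator measurableSet_Ioc
      · intro y hy
        have hy : 0 < y := hy
        have e1 : y ^ s = y ^ (s - 1) * y := by
          rw [← Real.rpow_add_one hy.ne']; congr 1; ring
        have e2 : y ^ (s + 1) = y ^ (s - 1) * y * y := by
          rw [← e1, ← Real.rpow_add_one hy.ne']
        rw [e1, e2]
        have hf : 0 ≤ Real.exp (-y) * y ^ (s - 1) := by positivity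
        set P := y ^ (s - 1)
        have e3 : Real.exp (-y) * P - 1 / (d * s) ^ 2 *
          (Real.exp (-y) * (P * y * y) - 2 * s * (Real.exp (-y) * (P * y))
          + s ^ 2 * (Real.exp (-y) * P)) =
          (Real.exp (-y) * P) * (1 - (y - s) ^ 2 / (d * s) ^ 2) := by ring
        rw [e3]
        have hds : 0 < d * s := mul_pos hd hs
        by_cases hm : y ∈ Set.Ioc (a * s) (A * s)
        · rw [Set.indicator_of_mem hm]
          have : 0 ≤ (y - s) ^ 2 / (d * s) ^ 2 := by positivity
          exact mul_le_of_le_one_right hf (by linarith)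
        · rw [Set.indicator_of_notMem hm]
          apply mul_nonpos_of_nonneg_of_nonpos hf
          have : 1 ≤ (y - s) ^ 2 / (d * s) ^ 2 := by
            rw [le_div_iff₀ (by positivity), one_mul]
            apply sq_le_sq.2
            rw [abs_of_pos hds]
            by_cases h1 : a * s < y
            · have h2 : A * s < y := by
                by_contra h
                exact hm ⟨h1, not_lt.1 h⟩
              refine le_trans ?_ (le_abs_self _)
              nlinarith
            · refine le_trans ?_ (neg_le_abs _)
              nlinarith
          linarith
    have j2 : IntegrableOn (fun y : ℝ => Real.exp (-y) * y ^ (s + 1)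
        - 2 * s * (Real.exp (-y) * y ^ s)) (Set.Ioi 0) := i2.sub (i1.const_mul _)
    have j3 : IntegrableOn (fun y : ℝ => 1 / (d * s) ^ 2 *
        (Real.exp (-y) * y ^ (s + 1) - 2 * s * (Real.exp (-y) * y ^ s)
          + s ^ 2 * (Real.exp (-y) * y ^ (s - 1)))) (Set.Ioi 0) :=
      (j2.add (i0.const_mul _)).const_mul _
    rw [setIntegral_indicator measurableSet_Ioc, Set.inter_eq_right.2 hsub,
      integral_sub i0 j3, integral_const_mul, integral_add j2 (i0.const_mul _),
      integral_sub i2 (i1.const_mul _), integral_const_mul, integral_const_mul,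
      ← g0, ← g1, ← g2] at key
    refine le_trans (le_of_eq ?_) key
    field_simp
    ring
  · rw [g0]
    refine setIntegral_mono_set i0 ?_ hsub.eventuallyLE
    filter_upwards [ae_restrict_mem measurableSet_Ioi] with y hy
    have hy : 0 < y := hy
    simp only [Pi.zero_apply]
    positivity


/-- If `q(t) → ∞` and `0 < a < 1 < A`, then
`∫_{a q(t)}^{A q(t)} y^(q(t)-1) e^(-y) dy ∼ Γ(q(t))` as `t → ∞`. -/
theorem stmt_12
    (q : ℝ → ℝ) (hqpos : ∀ t : ℝ, 0 < t → 0 < q t)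
    (hqtop : Tendsto q atTop atTop)
    (a A : ℝ) (ha : 0 < a) (ha1 : a < 1) (hA : 1 < A) :
    Tendsto (fun t =>
      (∫ y in Set.Ioc (a * q t) (A * q t), y ^ (q t - 1) * Real.exp (-y)) /
        Real.Gamma (q t)) atTop (nhds 1) := by
  obtain ⟨d, hd, hda, hdA⟩ : ∃ d : ℝ, 0 < d ∧ d ≤ 1 - a ∧ d ≤ A - 1 :=
    ⟨min (1 - a) (A - 1), lt_min (by linarith) (by linarith), min_le_left _ _, min_le_right _ _⟩
  have hl : Tendsto (fun t => 1 - 1 / d ^ 2 * (1 / q t)) atTop (nhds 1) := by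
    have h := (tendsto_inv_atTop_zero.comp hqtop).const_mul (1 / d ^ 2)
    have h2 := h.const_sub 1
    simpa [Function.comp_def] using h2
  refine tendsto_of_tendsto_of_tendsto_of_le_of_le' hl tendsto_const_nhds ?_ ?_
  · filter_upwards [eventually_gt_atTop 0] with t ht
    exact (aux_bounds a A (q t) d ha (hqpos t ht) hd hda hdA).1
  · filter_upwards [eventually_gt_atTop 0] with t ht
    exact (aux_bounds a A (q t) d ha (hqpos t ht) hd hda hdA).2
end

section
/- Let (p_k)_{k≥1} be strictly positive reals with ∑_k p_k = 1 and counting function ρ*(x) = #{k : p_k ≥ x} satisfying ρ*(x) ∼ x^{−α} ℓ(1/x) as x ↓ 0 for some α ∈ (0,1] and some ℓ slowly varying at infinity. Let q : (0,∞) → ℕ be a function of class 𝒬. Then, as t → ∞, ∑_{k≥1} ∑_{j=q(t)}^{∞} e^{−p_k t} (p_k t)^j / j! ∼ (t/q(t))^α ℓ(t/q(t)). -/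
open MeasureTheory Set Filter Real

noncomputable def rh (p : ℕ → ℝ) (x : ℝ) : ℝ := ∑' k, if x ≤ p k then (1:ℝ) else 0
noncomputable def vv (p : ℕ → ℝ) (x : ℝ) : ℝ := ∑' k, if x ≤ p k then (0:ℝ) else (p k)^2
noncomputable def tt (l : ℝ) (m : ℕ) : ℝ :=
  ∑' j : ℕ, Real.exp (-l) * l ^ (j + m) / Nat.factorial (j + m)

lemma fin_set (p : ℕ → ℝ) (hpsum : Summable p) (x : ℝ) (hx : 0 < x) :
    {k : ℕ | x ≤ p k}.Finite := by
  have h := hpsum.tendsto_cofinite_zero.eventually (gt_mem_nhds hx)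
  rw [Filter.eventually_cofinite] at h
  simpa using h

lemma rh_summable (p : ℕ → ℝ) (hpsum : Summable p) (x : ℝ) (hx : 0 < x) :
    Summable (fun k => if x ≤ p k then (1:ℝ) else 0) := by
  apply summable_of_hasFiniteSupport
  apply (fin_set p hpsum x hx).subset
  intro k hk
  by_contra h
  simp at hk h
  linarith

lemma rh_card (p : ℕ → ℝ) (hpsum : Summable p) (x : ℝ) (hx : 0 < x) :
    (Nat.card {k : ℕ | x ≤ p k} : ℝ) = rh p x := by
  classical
  have hf := fin_set p hpsum x hx
  unfold rh
  rw [tsum_eq_sum (s := hf.toFinset)]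
  · rw [Finset.sum_congr rfl (g := fun _ => (1:ℝ))]
    · rw [Finset.sum_const, nsmul_eq_mul, mul_one, ← Set.ncard_eq_toFinset_card _ hf]
      rfl
    · intro k hk
      simp at hk
      simp [hk]
  · intro k hk
    simp at hk
    simp [hk]

lemma rh_nonneg (p : ℕ → ℝ) (x : ℝ) : 0 ≤ rh p x :=
  tsum_nonneg fun k => by split_ifs <;> norm_num

lemma vv_summable (p : ℕ → ℝ) (hp : ∀ k, 0 < p k) (hpsum : Summable p) (x : ℝ) (hx : 0 < x) :
    Summable (fun k => if x ≤ p k then (0:ℝ) else (p k)^2) := by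
  refine Summable.of_nonneg_of_le (fun k => ?_) (fun k => ?_) (hpsum.mul_left x)
  · split_ifs <;> positivity
  · have := hp k
    split_ifs with h
    · positivity
    · push Not at h
      nlinarith

lemma vv_le (p : ℕ → ℝ) (hp : ∀ k, 0 < p k) (hpsum : Summable p) (hp1 : ∑' k, p k = 1)
    (x : ℝ) (hx : 0 < x) : vv p x ≤ x := by
  calc vv p x ≤ ∑' k, x * p k := by
        refine Summable.tsum_le_tsum (fun k => ?_) (vv_summable p hp hpsum x hx) (hpsum.mul_left x)
        have := hp k
        split_ifs with h
        · positivity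
        · push Not at h
          nlinarith
    _ = x := by rw [tsum_mul_left, hp1, mul_one]

lemma vv_step (p : ℕ → ℝ) (hp : ∀ k, 0 < p k) (hpsum : Summable p)
    (x : ℝ) (hx : 0 < x) : vv p x ≤ vv p (x/2) + x^2 * rh p (x/2) := by
  have s1 := vv_summable p hp hpsum (x/2) (by positivity)
  have s2 := (rh_summable p hpsum (x/2) (by positivity)).mul_left (x^2)
  unfold vv rh
  rw [← tsum_mul_left, ← s1.tsum_add s2]
  refine Summable.tsum_le_tsum (fun k => ?_) (vv_summable p hp hpsum x hx) (s1.add s2)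
  have := hp k
  split_ifs <;> nlinarith

lemma vv_ind (p : ℕ → ℝ) (hp : ∀ k, 0 < p k) (hpsum : Summable p) (hp1 : ∑' k, p k = 1)
    (x0 : ℝ) (h3 : ∀ x, 0 < x → x ≤ x0 → rh p (x/2) ≤ 3 * rh p x) (n : ℕ) :
    ∀ x, 0 < x → x ≤ x0 → vv p x ≤ x / 2^n + 12 * x^2 * rh p x := by
  induction n with
  | zero =>
    intro x hx _
    have := vv_le p hp hpsum hp1 x hx
    have := rh_nonneg p x
    simp only [pow_zero, div_one]
    have : 0 ≤ 12 * x^2 * rh p x := by positivity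
    linarith
  | succ n ih =>
    intro x hx hx0
    have h1 := vv_step p hp hpsum x hx
    have h2 := ih (x/2) (by positivity) (by linarith)
    have h4 := mul_le_mul_of_nonneg_left (h3 x hx hx0) (sq_nonneg x)
    have e : x / 2 / 2^n = x / 2^(n+1) := by rw [pow_succ]; field_simp
    rw [e] at h2
    nlinarith

lemma vv_bound (p : ℕ → ℝ) (hp : ∀ k, 0 < p k) (hpsum : Summable p) (hp1 : ∑' k, p k = 1)
    (x0 : ℝ) (h3 : ∀ x, 0 < x → x ≤ x0 → rh p (x/2) ≤ 3 * rh p x) 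
    (x : ℝ) (hx : 0 < x) (hx0 : x ≤ x0) : vv p x ≤ 12 * x^2 * rh p x := by
  have h : Tendsto (fun n : ℕ => x / 2^n + 12 * x^2 * rh p x) atTop
      (nhds (0 + 12 * x^2 * rh p x)) := by
    refine Tendsto.add_const _ ?_
    exact tendsto_const_nhds.div_atTop (tendsto_pow_atTop_atTop_of_one_lt (by norm_num))
  rw [zero_add] at h
  exact ge_of_tendsto' h fun n => vv_ind p hp hpsum hp1 x0 h3 n x hx hx0

lemma exp_sum (l : ℝ) : HasSum (fun j : ℕ => l ^ j / Nat.factorial j) (Real.exp l) := by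
  rw [Real.exp_eq_exp_ℝ]
  exact NormedSpace.expSeries_div_hasSum_exp l

lemma tt_summable (l : ℝ) (m : ℕ) :
    Summable (fun j : ℕ => Real.exp (-l) * l ^ (j + m) / Nat.factorial (j + m)) := by
  have := ((summable_nat_add_iff m).2 (exp_sum l).summable).mul_left (Real.exp (-l))
  simpa [mul_div_assoc] using this

lemma tt_nonneg (l : ℝ) (hl : 0 ≤ l) (m : ℕ) : 0 ≤ tt l m :=
  tsum_nonneg fun j => by positivity

lemma tt_compl (l : ℝ) (m : ℕ) :
    tt l m + ∑ j ∈ Finset.range m, Real.exp (-l) * (l ^ j / Nat.factorial j) = 1 := by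
  have h := ((exp_sum l).mul_left (Real.exp (-l)))
  have h2 := h.summable.sum_add_tsum_nat_add m
  rw [h.tsum_eq, ← Real.exp_add] at h2
  simp only [neg_add_cancel, Real.exp_zero] at h2
  rw [← h2, add_comm]
  simp [tt, mul_div_assoc]

lemma tt_le_one (l : ℝ) (hl : 0 ≤ l) (m : ℕ) : tt l m ≤ 1 := by
  have := tt_compl l m
  have : 0 ≤ ∑ j ∈ Finset.range m, Real.exp (-l) * (l ^ j / Nat.factorial j) :=
    Finset.sum_nonneg fun j _ => by positivity
  linarith

-- Chernoff, upper tail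
lemma tt_chern (l : ℝ) (hl : 0 ≤ l) (m : ℕ) (s : ℝ) (hs : 1 ≤ s) :
    s ^ m * tt l m ≤ Real.exp (l * s - l) := by
  have h := ((exp_sum (l * s)).mul_left (Real.exp (-l)))
  have e : Real.exp (-l) * Real.exp (l * s) = Real.exp (l * s - l) := by
    rw [← Real.exp_add]; ring_nf
  rw [e] at h
  have h2 := h.summable.sum_add_tsum_nat_add m
  rw [h.tsum_eq] at h2
  have h3 : 0 ≤ ∑ j ∈ Finset.range m, Real.exp (-l) * ((l*s) ^ j / Nat.factorial j) :=
    Finset.sum_nonneg fun j _ => by positivity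
  have h4 : s ^ m * tt l m ≤ ∑' j : ℕ, Real.exp (-l) * ((l*s) ^ (j+m) / Nat.factorial (j+m)) := by
    unfold tt
    rw [← tsum_mul_left]
    refine Summable.tsum_le_tsum (fun j => ?_) ((tt_summable l m).mul_left _)
      ((summable_nat_add_iff m).2 h.summable)
    have : s ^ m ≤ s ^ (j + m) := pow_le_pow_right₀ hs (by omega)
    have h5 : 0 ≤ Real.exp (-l) * l ^ (j + m) / Nat.factorial (j + m) := by positivity
    calc _ ≤ s ^ (j+m) * (Real.exp (-l) * l ^ (j + m) / Nat.factorial (j + m)) := by gcongr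
      _ = _ := by rw [mul_pow]; ring
  linarith

-- Chernoff, lower tail
lemma tt_chern2 (l : ℝ) (hl : 0 ≤ l) (m : ℕ) (s : ℝ) (hs0 : 0 < s) (hs : s ≤ 1) :
    s ^ m * (1 - tt l m) ≤ Real.exp (l * s - l) := by
  have h := ((exp_sum (l * s)).mul_left (Real.exp (-l)))
  have e : Real.exp (-l) * Real.exp (l * s) = Real.exp (l * s - l) := by
    rw [← Real.exp_add]; ring_nf
  rw [e] at h
  have h1 := h.summable.sum_le_tsum (Finset.range m) (fun j _ => by positivity)
  rw [h.tsum_eq] at h1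
  have h2 : 1 - tt l m = ∑ j ∈ Finset.range m, Real.exp (-l) * (l ^ j / Nat.factorial j) := by
    have := tt_compl l m
    linarith
  refine le_trans ?_ h1
  rw [h2, Finset.mul_sum]
  refine Finset.sum_le_sum fun j hj => ?_
  have : s ^ m ≤ s ^ j := pow_le_pow_of_le_one hs0.le hs (Finset.mem_range.1 hj).le
  have h5 : 0 ≤ Real.exp (-l) * (l ^ j / Nat.factorial j) := by positivity
  calc _ ≤ s ^ j * (Real.exp (-l) * (l ^ j / Nat.factorial j)) := by gcongr
    _ = _ := by rw [mul_pow]; ring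

lemma h_mono (u v : ℝ) (hu : 0 ≤ u) (huv : u ≤ v) (hv : v ≤ 1) :
    u * Real.exp (1 - u) ≤ v * Real.exp (1 - v) := by
  have h1 : u ≤ v * Real.exp (u - v) := by
    have := Real.add_one_le_exp (u - v)
    have h0 : 0 ≤ v := hu.trans huv
    nlinarith [mul_le_mul_of_nonneg_left this h0, mul_nonneg (sub_nonneg.2 huv) (sub_nonneg.2 hv)]
  calc u * Real.exp (1 - u) ≤ v * Real.exp (u - v) * Real.exp (1 - u) := by gcongr
    _ = _ := by rw [mul_assoc, ← Real.exp_add]; ring_nf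

lemma tt_up (u v : ℝ) (hu : 0 < u) (huv : u ≤ v) (hv : v ≤ 1) (m : ℕ) :
    tt (u * (m + 2 : ℕ)) (m + 2) ≤ (v * Real.exp (1 - v)) ^ m * (Real.exp 2 * u ^ 2) := by
  have h := tt_chern (u * (m + 2 : ℕ)) (by positivity) (m+2) (1/u)
    (by rw [le_div_iff₀ hu]; linarith)
  have h1 : tt (u * (m + 2 : ℕ)) (m + 2) ≤ (u * Real.exp (1 - u)) ^ (m + 2) := by
    rw [mul_pow, ← Real.exp_nat_mul]
    rw [one_div, inv_pow, inv_mul_le_iff₀ (by positivity)] at h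
    have e : u * (m + 2 : ℕ) * u⁻¹ - u * (m + 2 : ℕ) = (m + 2 : ℕ) * (1 - u) := by
      rw [mul_right_comm, mul_inv_cancel₀ hu.ne']; ring
    rw [e] at h
    exact h
  refine h1.trans ?_
  rw [pow_add]
  have h2 := h_mono u v hu.le huv hv
  have h0 : 0 ≤ u * Real.exp (1 - u) := by positivity
  have h3 : (u * Real.exp (1 - u))^2 ≤ Real.exp 2 * u ^ 2 := by
    rw [mul_pow, ← Real.exp_nat_mul, mul_comm]
    gcongr
    push_cast
    linarith
  have hv0 : 0 ≤ v := hu.le.trans huv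
  gcongr

lemma tt_low (l e : ℝ) (he : 0 < e) (m : ℕ) (hl : (1 + e) * m ≤ l) :
    1 - tt l m ≤ ((1 + e) * Real.exp (- e)) ^ m := by
  have hm : (0:ℝ) ≤ m := by positivity
  have hl0 : 0 ≤ l := by nlinarith
  have h := tt_chern2 l hl0 m (1/(1+e)) (by positivity)
    (by rw [div_le_iff₀ (by positivity)]; linarith)
  rw [one_div, inv_pow, inv_mul_le_iff₀ (by positivity)] at h
  refine h.trans ?_
  rw [mul_pow, ← Real.exp_nat_mul]
  gcongr
  have e1 : l * (1+e)⁻¹ - l = - e * (l / (1+e)) := by field_simp; ring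
  rw [e1]
  have : (m:ℝ) ≤ l / (1+e) := by rw [le_div_iff₀ (by positivity)]; linarith
  nlinarith

-- the sum
noncomputable def ss (p : ℕ → ℝ) (t : ℝ) (m : ℕ) : ℝ := ∑' k, tt (p k * t) m

lemma ss_upper (p : ℕ → ℝ) (hp : ∀ k, 0 < p k) (hpsum : Summable p)
    (v : ℝ) (hv0 : 0 < v) (hv : v < 1) (m : ℕ) (x : ℝ) (hx : 0 < x) :
    Summable (fun k => tt (p k * ((m+2 : ℕ) / x)) (m+2)) ∧
    ss p ((m+2 : ℕ) / x) (m+2) ≤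
      rh p (v * x) + (v * Real.exp (1 - v)) ^ m * (Real.exp 2 * (vv p x / x^2)) := by
  set A := (v * Real.exp (1 - v)) ^ m with hA
  have hA0 : 0 ≤ A := by positivity
  have s1 := rh_summable p hpsum (v*x) (by positivity)
  have s2 := (((vv_summable p hp hpsum x hx).div_const (x^2)).mul_left (Real.exp 2)).mul_left A
  have key : ∀ k, tt (p k * ((m+2 : ℕ) / x)) (m+2) ≤
      (if v * x ≤ p k then (1:ℝ) else 0) +
        A * (Real.exp 2 * ((if x ≤ p k then (0:ℝ) else (p k)^2) / x^2)) := by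
    intro k
    have hk := hp k
    by_cases h : v * x ≤ p k
    · rw [if_pos h]
      have h1 := tt_le_one (p k * ((m+2 : ℕ) / x)) (by positivity) (m+2)
      have : 0 ≤ A * (Real.exp 2 * ((if x ≤ p k then (0:ℝ) else (p k)^2) / x^2)) := by
        split_ifs <;> positivity
      linarith
    · rw [if_neg h]
      push Not at h
      rw [if_neg (by nlinarith)]
      have h1 := tt_up (p k / x) v (by positivity) (by rw [div_le_iff₀ hx]; exact h.le) hv.le m
      rw [zero_add, ← div_pow]
      convert h1 using 2
      ring
  have hs : Summable (fun k => tt (p k * ((m+2 : ℕ) / x)) (m+2)) :=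
    Summable.of_nonneg_of_le
      (fun k => tt_nonneg _ (by have := hp k; positivity) _) key (s1.add s2)
  refine ⟨hs, ?_⟩
  unfold ss rh vv
  rw [← tsum_div_const, ← tsum_mul_left, ← tsum_mul_left, ← s1.tsum_add s2]
  exact Summable.tsum_le_tsum key hs (s1.add s2)

lemma ss_lower (p : ℕ → ℝ) (hp : ∀ k, 0 < p k) (hpsum : Summable p)
    (e : ℝ) (he : 0 < e) (m : ℕ) (x : ℝ) (hx : 0 < x) :
    (1 - ((1 + e) * Real.exp (- e)) ^ (m+2)) * rh p ((1+e) * x) ≤ ss p ((m+2 : ℕ) / x) (m+2) := by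
  have hs := (ss_upper p hp hpsum (1/2) (by norm_num) (by norm_num) m x hx).1
  have s1 := rh_summable p hpsum ((1+e)*x) (by positivity)
  unfold ss rh
  rw [← tsum_mul_left]
  refine Summable.tsum_le_tsum (fun k => ?_) (s1.mul_left _) hs
  have hk := hp k
  split_ifs with h
  · have := tt_low (p k * ((m+2 : ℕ) / x)) e he (m+2) (by
      rw [mul_div_assoc', le_div_iff₀ hx]
      have : (0:ℝ) ≤ (m+2 : ℕ) := by positivity
      nlinarith)
    linarith
  · have := tt_nonneg (p k * ((m+2 : ℕ) / x)) (by positivity) (m+2)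
    linarith

lemma th_lt (v : ℝ) (hv : v ≠ 1) : v * Real.exp (1 - v) < 1 := by
  have h := Real.add_one_lt_exp (x := v - 1) (sub_ne_zero.2 hv)
  have : v < Real.exp (v - 1) := by linarith
  calc v * Real.exp (1 - v) < Real.exp (v-1) * Real.exp (1 - v) := by gcongr
    _ = 1 := by rw [← Real.exp_add]; simp

theorem stmt_14
    (p : ℕ → ℝ) (hp : ∀ k, 0 < p k) (hpsum : Summable p) (hp1 : ∑' k, p k = 1)
    (α : ℝ) (hα : α ∈ Set.Ioc (0:ℝ) 1)
    (ℓ : ℝ → ℝ) (hℓpos : ∀ x : ℝ, 0 < x → 0 < ℓ x)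
    (hℓsv : ∀ c : ℝ, 0 < c → Tendsto (fun t => ℓ (c * t) / ℓ t) atTop (nhds 1))
    (hρ : Tendsto (fun x => (Nat.card {k : ℕ | x ≤ p k} : ℝ) / (x ^ (-α) * ℓ (1 / x)))
      (nhdsWithin 0 (Set.Ioi 0)) (nhds 1))
    (q : ℝ → ℕ)
    (hqtop : Tendsto (fun t => (q t : ℝ)) atTop atTop)
    (hqsmall : Tendsto (fun t => (q t : ℝ) / t) atTop (nhds 0)) :
    Tendsto (fun t =>
      (∑' k : ℕ, ∑' j : ℕ,
          Real.exp (-(p k * t)) * (p k * t) ^ (j + q t) / Nat.factorial (j + q t)) /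
        ((t / q t) ^ α * ℓ (t / q t))) atTop (nhds 1) := by
  set g : ℝ → ℝ := fun x => x ^ (-α) * ℓ (1 / x) with hg
  have hgpos : ∀ x, 0 < x → 0 < g x := fun x hx =>
    mul_pos (Real.rpow_pos_of_pos hx _) (hℓpos _ (by positivity))
  have hpos : ∀ᶠ x : ℝ in nhdsWithin 0 (Set.Ioi 0), 0 < x := self_mem_nhdsWithin
  have hR : Tendsto (fun x => rh p x / g x) (nhdsWithin 0 (Set.Ioi 0)) (nhds 1) := by
    refine hρ.congr' ?_
    filter_upwards [hpos] with x hx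
    rw [rh_card p hpsum x hx]
  have hscale : ∀ c : ℝ, 0 < c → Tendsto (fun x : ℝ => c * x) (nhdsWithin 0 (Set.Ioi 0))
      (nhdsWithin 0 (Set.Ioi 0)) := by
    intro c hc
    refine tendsto_nhdsWithin_iff.2 ⟨?_, ?_⟩
    · have : Tendsto (fun x : ℝ => c * x) (nhds 0) (nhds (c * 0)) := tendsto_id.const_mul c
      rw [mul_zero] at this
      exact this.mono_left nhdsWithin_le_nhds
    · filter_upwards [hpos] with x hx
      exact mul_pos hc hx
  have hRc : ∀ c : ℝ, 0 < c →
      Tendsto (fun x => rh p (c * x) / g x) (nhdsWithin 0 (Set.Ioi 0)) (nhds (c ^ (-α))) := by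
    intro c hc
    have h1 := hR.comp (hscale c hc)
    have h2 := (hℓsv c⁻¹ (by positivity)).comp (tendsto_inv_nhdsGT_zero (𝕜 := ℝ))
    have h3 := (h1.mul h2).mul_const (c ^ (-α))
    simp only [one_mul] at h3
    refine h3.congr' ?_
    filter_upwards [hpos] with x hx
    have hl1 := hℓpos (1/x) (by positivity)
    have hl2 := hℓpos (1/(c*x)) (by positivity)
    have e1 : c⁻¹ * x⁻¹ = 1/(c*x) := by field_simp
    have e2 : x⁻¹ = 1/x := by field_simp
    have hx1 := Real.rpow_pos_of_pos hx (-α)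
    have hc1 := Real.rpow_pos_of_pos hc (-α)
    simp only [Function.comp, hg]
    rw [e1, e2, Real.mul_rpow hc.le hx.le]
    field_simp
  -- doubling
  have hdoub : ∃ x0 > 0, ∀ x, 0 < x → x ≤ x0 → rh p (x/2) ≤ 3 * rh p x := by
    have h2 : ((1/2 : ℝ)) ^ (-α) < 5/2 := by
      rw [one_div, Real.inv_rpow (by norm_num), ← Real.rpow_neg (by norm_num), neg_neg]
      calc (2:ℝ)^α ≤ 2^(1:ℝ) := Real.rpow_le_rpow_of_exponent_le (by norm_num) hα.2
        _ < 5/2 := by norm_num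
    have ev1 := (hRc (1/2) (by norm_num)).eventually (gt_mem_nhds h2)
    have ev2 := hR.eventually (lt_mem_nhds (show (5/6 : ℝ) < 1 by norm_num))
    have ev := ev1.and ev2
    rw [eventually_nhdsWithin_iff, Metric.eventually_nhds_iff] at ev
    obtain ⟨d, hd, H⟩ := ev
    refine ⟨d/2, by positivity, fun x hx hxd => ?_⟩
    obtain ⟨a, b⟩ := H (y := x) (by
      rw [Real.dist_eq, sub_zero, abs_of_pos hx]; linarith) hx
    have hgx := hgpos x hx
    rw [div_lt_iff₀ hgx] at a
    rw [lt_div_iff₀ hgx] at b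
    have e : x/2 = 1/2 * x := by ring
    rw [e]
    linarith
  obtain ⟨x0, hx0, h3⟩ := hdoub
  -- the variable x = q t / t
  have hX : Tendsto (fun t => (q t : ℝ) / t) atTop (nhdsWithin 0 (Set.Ioi 0)) := by
    refine tendsto_nhdsWithin_iff.2 ⟨hqsmall, ?_⟩
    filter_upwards [hqtop.eventually_gt_atTop 0, eventually_gt_atTop 0] with t h1 h2
    exact div_pos h1 h2
  have hqn : Tendsto (fun t => q t - 2) atTop atTop :=
    (tendsto_sub_atTop_nat 2).comp (tendsto_natCast_atTop_iff.1 hqtop)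
  have hpow : ∀ a : ℝ, 0 ≤ a → a < 1 → Tendsto (fun t => a ^ (q t - 2)) atTop (nhds 0) :=
    fun a h0 h1 => (tendsto_pow_atTop_nhds_zero_of_lt_one h0 h1).comp hqn
  have hS : Tendsto (fun t => ss p t (q t) / g (q t / t)) atTop (nhds 1) := by
    have hupper : ∀ v : ℝ, 0 < v → v < 1 → ∀ᶠ t in atTop, ss p t (q t) / g (q t / t) ≤
        rh p (v * (q t / t)) / g (q t / t) + (v * Real.exp (1 - v)) ^ (q t - 2) *
          (Real.exp 2 * 12) * (rh p (q t / t) / g (q t / t)) := by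
      intro v hv0 hv1
      filter_upwards [hqtop.eventually_ge_atTop 2, eventually_gt_atTop 0,
        hqsmall.eventually (gt_mem_nhds hx0)] with t h1 ht h4
      have h2 : 2 ≤ q t := by exact_mod_cast h1
      have hx : 0 < (q t : ℝ) / t := by positivity
      have hU := (ss_upper p hp hpsum v hv0 hv1 (q t - 2) _ hx).2
      rw [Nat.sub_add_cancel h2] at hU
      have e : (q t : ℝ) / (q t / t) = t := by field_simp
      rw [e] at hU
      have hV := vv_bound p hp hpsum hp1 x0 h3 _ hx h4.le
      have hV2 : vv p (q t / t) / (q t / t)^2 ≤ 12 * rh p (q t / t) := by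
        rw [div_le_iff₀ (by positivity)]; linarith
      have hgx := hgpos _ hx
      rw [← mul_div_assoc _ (rh p (q t / t)), ← add_div]
      gcongr
      refine hU.trans ?_
      rw [mul_assoc, mul_assoc]
      gcongr
    have hlower : ∀ e : ℝ, 0 < e → ∀ᶠ t in atTop,
        (1 - ((1 + e) * Real.exp (- e)) ^ (q t)) * (rh p ((1+e) * (q t / t)) / g (q t / t)) ≤
        ss p t (q t) / g (q t / t) := by
      intro e he
      filter_upwards [hqtop.eventually_ge_atTop 2, eventually_gt_atTop 0] with t h1 ht
      have h2 : 2 ≤ q t := by exact_mod_cast h1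
      have hx : 0 < (q t : ℝ) / t := by positivity
      have hU := (ss_lower p hp hpsum e he (q t - 2) _ hx)
      rw [Nat.sub_add_cancel h2] at hU
      have e : (q t : ℝ) / (q t / t) = t := by field_simp
      rw [e] at hU
      have hgx := hgpos _ hx
      rw [mul_div_assoc']
      gcongr
    have hcont : Tendsto (fun v : ℝ => v ^ (-α)) (nhds 1) (nhds 1) := by
      have := (Real.continuousAt_rpow_const 1 (-α) (Or.inl one_ne_zero)).tendsto
      simpa using this
    rw [tendsto_order]
    constructor
    · intro a ha
      have ev : ∀ᶠ v in nhdsWithin (1:ℝ) (Set.Ioi 1), a < v ^ (-α) ∧ 1 < v :=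
        ((hcont.mono_left nhdsWithin_le_nhds).eventually (lt_mem_nhds ha)).and self_mem_nhdsWithin
      obtain ⟨v, hva, hv1⟩ := ev.exists
      obtain ⟨e, rfl⟩ : ∃ e, v = 1 + e := ⟨v - 1, by ring⟩
      have he : 0 < e := by linarith
      have hth : (1 + e) * Real.exp (-e) < 1 := by
        have := th_lt (1+e) (by linarith)
        simpa using this
      have hp1 : Tendsto (fun t => ((1 + e) * Real.exp (- e)) ^ (q t)) atTop (nhds 0) :=
        (tendsto_pow_atTop_nhds_zero_of_lt_one (by positivity) hth).comp
          (tendsto_natCast_atTop_iff.1 hqtop)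
      have hl := (hp1.const_sub 1).mul ((hRc (1+e) (by positivity)).comp hX)
      rw [sub_zero, one_mul] at hl
      filter_upwards [hlower e he, hl.eventually (lt_mem_nhds hva)] with t h1 h2
      exact lt_of_lt_of_le h2 h1
    · intro a ha
      have ev : ∀ᶠ v in nhdsWithin (1:ℝ) (Set.Iio 1), (v ^ (-α) < a ∧ v < 1) ∧ 0 < v :=
        (((hcont.mono_left nhdsWithin_le_nhds).eventually (gt_mem_nhds ha)).and
          self_mem_nhdsWithin).and (nhdsWithin_le_nhds (lt_mem_nhds one_pos))
      obtain ⟨v, ⟨hva, hv1⟩, hv0⟩ := ev.exists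
      have hl := ((hRc v hv0).comp hX).add
        (((hpow _ (by positivity) (th_lt v hv1.ne)).mul_const (Real.exp 2 * 12)).mul (hR.comp hX))
      rw [zero_mul, zero_mul, add_zero] at hl
      filter_upwards [hupper v hv0 hv1, hl.eventually (gt_mem_nhds hva)] with t h1 h2
      exact lt_of_le_of_lt h1 h2
  refine hS.congr' ?_
  filter_upwards [hqtop.eventually_gt_atTop 0, eventually_gt_atTop 0] with t h1 h2
  have e1 : 1 / ((q t : ℝ) / t) = t / q t := one_div_div _ _
  have e2 : ((q t : ℝ) / t) ^ (-α) = (t / q t) ^ α := by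
    rw [Real.rpow_neg (by positivity), ← Real.inv_rpow (by positivity), inv_div]
  simp only [hg, e1, e2]
  rfl
end
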